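/- arXiv:1712.04549 — 2 statements merged into one kernel-verified Lean document; each statement's English description precedes it below -/
import Mathlib

section
/- Let H be a 2-connected outerplanar near-triangulation with k triangles. Then H is isomorphic to a minor of 𝒬_k. Furthermore, the minor inclusion can be chosen so that for every edge a_1a_2 of H incident with the unbounded face and for each i ∈ {1,2}, the vertex w_i belongs to the node of a_i, where w_1w_2 is the base edge of 𝒬_k. -/
/-!
Common definitions: minors, widths, connectivity, the specific graphs
`K4`, `K23`, `C32`, `graphA`, the binary trees `CT_h`, the graphs `𝒫_k`, `𝒬_k`,
the trees `T_h`, homeomorphic embeddings, cascades, and related notions,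
following Dang--Thomas, "Minors of two-connected graphs of large path-width".
-/

open SimpleGraph

/-- A minor model of `H` in `G`: branch sets `f w` are nonempty, connected,
pairwise disjoint, and edges of `H` are realized by edges of `G` between branch sets. -/
def IsMinorModel {W V : Type*} (H : SimpleGraph W) (G : SimpleGraph V) (f : W → Set V) : Prop :=
  (∀ w, (f w).Nonempty) ∧
  (∀ w, (G.induce (f w)).Connected) ∧
  (∀ w₁ w₂ : W, w₁ ≠ w₂ → Disjoint (f w₁) (f w₂)) ∧
  (∀ w₁ w₂ : W, H.Adj w₁ w₂ → ∃ v₁ ∈ f w₁, ∃ v₂ ∈ f w₂, G.Adj v₁ v₂)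

/-- `H` is (isomorphic to) a minor of `G`. -/
def IsMinor {W V : Type*} (H : SimpleGraph W) (G : SimpleGraph V) : Prop :=
  ∃ f : W → Set V, IsMinorModel H G f

/-- The complete graph on four vertices. -/
def K4 : SimpleGraph (Fin 4) := ⊤

/-- The complete bipartite graph `K_{2,3}`. -/
def K23 : SimpleGraph (Fin 2 ⊕ Fin 3) := completeBipartiteGraph (Fin 2) (Fin 3)

/-- The graph `A`: a cycle `a₁a₂a₃a₄a₅a₆a₁` plus the edges `a₁a₃`, `a₃a₅`, `a₅a₁`. -/
def graphA : SimpleGraph (Fin 6) :=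
  SimpleGraph.fromEdgeSet
    {s(0, 1), s(1, 2), s(2, 3), s(3, 4), s(4, 5), s(5, 0), s(0, 2), s(2, 4), s(4, 0)}

/-- The graph `C_{3,2}`: two disjoint triangles. -/
def C32 : SimpleGraph (Fin 2 × Fin 3) :=
  SimpleGraph.fromRel (fun u v => u.1 = v.1)

/-- A graph is outerplanar iff it has no `K₄` minor and no `K_{2,3}` minor
(the classical characterization of outerplanarity). -/
def Outerplanar {V : Type*} (G : SimpleGraph V) : Prop :=
  ¬ IsMinor K4 G ∧ ¬ IsMinor K23 G

/-- `G` is `k`-connected: it has more than `k` vertices and deleting fewer than `k`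
vertices leaves a connected graph. -/
def IsKConnected {V : Type*} [Fintype V] (k : ℕ) (G : SimpleGraph V) : Prop :=
  k + 1 ≤ Fintype.card V ∧
  ∀ S : Finset V, S.card < k → (G.induce ((↑S : Set V)ᶜ)).Connected

/-- `(Tr, X)` is a tree-decomposition of `G`: `Tr` is a tree, the bags `X t` cover all
vertices and edges (W1), and whenever `t₂` lies on the path of `Tr` between `t₁` and `t₃`
we have `X t₁ ∩ X t₃ ⊆ X t₂` (W2). -/
def IsTreeDecomp {V T : Type*} (G : SimpleGraph V) (Tr : SimpleGraph T) (X : T → Finset V) :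
    Prop :=
  Tr.IsTree ∧
  (∀ v : V, ∃ t, v ∈ X t) ∧
  (∀ u v : V, G.Adj u v → ∃ t, u ∈ X t ∧ v ∈ X t) ∧
  (∀ (t₁ t₂ t₃ : T) (p : Tr.Walk t₁ t₃), p.IsPath → t₂ ∈ p.support →
    ∀ v : V, v ∈ X t₁ → v ∈ X t₃ → v ∈ X t₂)

/-- A path-decomposition of `G`, with bags indexed by `Fin n`. -/
def IsPathDecomp {V : Type*} (G : SimpleGraph V) {n : ℕ} (X : Fin n → Finset V) : Prop :=
  (∀ v : V, ∃ i, v ∈ X i) ∧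
  (∀ u v : V, G.Adj u v → ∃ i, u ∈ X i ∧ v ∈ X i) ∧
  (∀ i j k : Fin n, i ≤ j → j ≤ k → ∀ v : V, v ∈ X i → v ∈ X k → v ∈ X j)

/-- The path-width of a finite graph: the least `w` such that `G` has a
path-decomposition all of whose bags have at most `w + 1` vertices. -/
noncomputable def pathwidth {V : Type*} [Fintype V] (G : SimpleGraph V) : ℕ :=
  sInf {w | ∃ (n : ℕ) (X : Fin n → Finset V), IsPathDecomp G X ∧ ∀ i, (X i).card ≤ w + 1}

/-- The tree-width of a finite graph: the least `w` such that `G` has a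
tree-decomposition all of whose bags have at most `w + 1` vertices. -/
noncomputable def treewidth {V : Type*} [Fintype V] (G : SimpleGraph V) : ℕ :=
  sInf {w | ∃ (T : Type) (_ : Fintype T) (Tr : SimpleGraph T) (X : T → Finset V),
    IsTreeDecomp G Tr X ∧ ∀ t, (X t).card ≤ w + 1}

/-- Vertices of the binary tree `CT_h`: paths from the root, recorded as reversed
lists of left/right moves, of length at most `h`. -/
abbrev CTVert (h : ℕ) := {l : List Bool // l.length ≤ h}

/-- The binary tree `CT_h` of height `h`. -/
def CTgraph (h : ℕ) : SimpleGraph (CTVert h) :=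
  SimpleGraph.fromEdgeSet
    {e | ∃ (b : Bool) (σ : List Bool) (hσ : σ.length < h),
      e = s((⟨σ, le_of_lt hσ⟩ : CTVert h), (⟨b :: σ, by simpa using hσ⟩ : CTVert h))}

/-- The graph `𝒫_k`: the binary tree `CT_k` together with one extra vertex (`none`)
adjacent to every leaf of `CT_k`. -/
def Pgraph (k : ℕ) : SimpleGraph (Option (CTVert k)) :=
  SimpleGraph.fromEdgeSet
    ({e | ∃ (b : Bool) (σ : List Bool) (hσ : σ.length < k),
        e = s(some (⟨σ, le_of_lt hσ⟩ : CTVert k), some (⟨b :: σ, by simpa using hσ⟩ : CTVert k))} ∪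
     {e | ∃ l : CTVert k, l.1.length = k ∧ e = s(none, some l)})

/-- Vertices of `𝒬_k`: the two base vertices of the root triangle (`Sum.inl false` and
`Sum.inl true`), together with one apex vertex for each node of the complete binary tree
of depth `< k` (recorded as a reversed list of moves). -/
abbrev QVert (k : ℕ) := Bool ⊕ {l : List Bool // l.length < k}

/-- The two ends of the base edge of the copy of the triangle at node `σ` of `𝒬_k`. -/
def qbase (k : ℕ) : List Bool → QVert k × QVert k
  | [] => (Sum.inl false, Sum.inl true)
  | b :: σ =>
      ((if b then (qbase k σ).2 else (qbase k σ).1),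
        if h : σ.length < k then Sum.inr ⟨σ, h⟩ else Sum.inl false)

/-- The graph `𝒬_k`, built from triangles as in the recursive definition: the triangle at
node `σ` consists of the base edge `qbase k σ` together with the apex vertex `Sum.inr σ`;
the base edge of `𝒬_k` is `s(Sum.inl false, Sum.inl true)`. -/
def Qgraph (k : ℕ) : SimpleGraph (QVert k) :=
  SimpleGraph.fromEdgeSet
    ({s(Sum.inl false, Sum.inl true)} ∪
     {e | ∃ (σ : List Bool) (h : σ.length < k),
        e = s(Sum.inr ⟨σ, h⟩, (qbase k σ).1) ∨ e = s(Sum.inr ⟨σ, h⟩, (qbase k σ).2)})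

/-- The minor vertices of the tree `T_h` (one for each string of length `≤ h`). -/
abbrev MVert (h : ℕ) := {l : List Bool // l.length ≤ h}

/-- The major vertices of the tree `T_h` (one for each string of length `≤ h - 1`). -/
abbrev JVert (h : ℕ) := {l : List Bool // l.length + 1 ≤ h}

/-- Vertices of the tree `T_h` (obtained from `CT_h` by subdividing every edge not incident
with a degree-one vertex and adding the minor root). -/
abbrev TVert (h : ℕ) := MVert h ⊕ JVert h

/-- The tree `T_h`: each major vertex `σ` is adjacent to the minor vertices `σ` (its parent),
`false :: σ` (its left neighbor) and `true :: σ` (its right neighbor). -/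
def Tgraph (h : ℕ) : SimpleGraph (TVert h) :=
  SimpleGraph.fromEdgeSet
    {e | ∃ (σ : List Bool) (hσ : σ.length + 1 ≤ h),
      e = s(Sum.inr ⟨σ, hσ⟩, Sum.inl ⟨σ, Nat.le_of_succ_le hσ⟩) ∨
      ∃ b : Bool, e = s(Sum.inr ⟨σ, hσ⟩, Sum.inl ⟨b :: σ, by simpa using hσ⟩)}

/-- A homeomorphic embedding of `TA` into `TB`: an injection such that for any two edges of
`TA` sharing an end `t`, the corresponding paths of `TB` are edge-disjoint. -/
def IsHomeoEmb {A B : Type*} (TA : SimpleGraph A) (TB : SimpleGraph B) (η : A → B) : Prop :=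
  Function.Injective η ∧
  ∀ ⦃t t₁ t₂ : A⦄, TA.Adj t t₁ → TA.Adj t t₂ → t₁ ≠ t₂ →
    ∀ (p₁ : TB.Walk (η t) (η t₁)) (p₂ : TB.Walk (η t) (η t₂)),
      p₁.IsPath → p₂.IsPath → ∀ e ∈ p₁.edges, e ∉ p₂.edges

/-- `v` lies in the span of `η`: it lies on a path of `TB` between two vertices in the
image of `η`. -/
def inSpan {A B : Type*} (TB : SimpleGraph B) (η : A → B) (v : B) : Prop :=
  ∃ (a₁ a₂ : A) (p : TB.Walk (η a₁) (η a₂)), p.IsPath ∧ v ∈ p.support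

/-- A cascade of height `h` and size `s` in the tree-decomposition `(Tr, X)`:
a homeomorphic embedding of `T_h` with `|X (η t)| = s` for every minor vertex `t`
and `|X t| ≥ s` for every `t` in the span. -/
def IsCascade {V T : Type*} (Tr : SimpleGraph T) (X : T → Finset V) (h s : ℕ)
    (η : TVert h → T) : Prop :=
  IsHomeoEmb (Tgraph h) Tr η ∧
  (∀ l : MVert h, (X (η (Sum.inl l))).card = s) ∧
  (∀ t : T, inSpan Tr η t → s ≤ (X t).card)

/-- An injective cascade with common intersection set `I`. -/
def IsInjectiveCascade {V T : Type*} (Tr : SimpleGraph T) (X : T → Finset V) (h s : ℕ)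
    (η : TVert h → T) (I : Finset V) : Prop :=
  IsCascade Tr X h s η ∧ I.card < s ∧
  ∀ t t' : TVert h, t ≠ t' → ((X (η t) : Set V) ∩ (X (η t') : Set V)) = (I : Set V)

/-- A family of `s` disjoint paths in `G \ I` (a linkage). -/
def IsLinkage {V : Type*} (G : SimpleGraph V) (I : Finset V) {s : ℕ} {x y : Fin s → V}
    (P : ∀ i : Fin s, G.Walk (x i) (y i)) : Prop :=
  (∀ i, (P i).IsPath) ∧
  (∀ i, ∀ v ∈ (P i).support, v ∉ I) ∧
  (∀ i j, i ≠ j → ∀ v ∈ (P i).support, v ∉ (P j).support)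

/-- An ordered cascade: an injective cascade of size `s + |I|` with common intersection set
`I`, together with orderings `ξ t : Fin s → X (η t) \ I` of the bags at minor vertices, such
that at every major vertex there are left and right linkages connecting corresponding
vertices. -/
def IsOrderedCascade {V T : Type*} (G : SimpleGraph V) (Tr : SimpleGraph T)
    (X : T → Finset V) (h s : ℕ) (η : TVert h → T) (I : Finset V)
    (ξ : MVert h → Fin s → V) : Prop :=
  IsInjectiveCascade Tr X h (s + I.card) η I ∧
  (∀ t : MVert h, Function.Injective (ξ t) ∧
    Set.range (ξ t) = (X (η (Sum.inl t)) : Set V) \ (I : Set V)) ∧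
  ∀ (σ : List Bool) (hσ : σ.length + 1 ≤ h),
    (∃ P : ∀ i : Fin s,
        G.Walk (ξ ⟨σ, Nat.le_of_succ_le hσ⟩ i) (ξ ⟨false :: σ, by simpa using hσ⟩ i),
      IsLinkage G I P) ∧
    (∃ Q : ∀ i : Fin s,
        G.Walk (ξ ⟨σ, Nat.le_of_succ_le hσ⟩ i) (ξ ⟨true :: σ, by simpa using hσ⟩ i),
      IsLinkage G I Q)

/-- The vertex set of the `η`-torso at the major vertex `σ` of `T_h`: the union of the bags
`X t - I` over all `t` such that the path in `Tr` from `t` to `η σ` contains none of the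
images of the three minor neighbors of `σ` as an internal vertex. -/
def torsoSet {V T : Type*} (Tr : SimpleGraph T) (X : T → Finset V) {h : ℕ}
    (η : TVert h → T) (I : Finset V) (σ : List Bool) (hσ : σ.length + 1 ≤ h) : Set V :=
  {v | v ∉ I ∧ ∃ t : T,
    (∀ p : Tr.Walk t (η (Sum.inr ⟨σ, hσ⟩)), p.IsPath →
      ∀ u : T,
        (u = η (Sum.inl ⟨σ, Nat.le_of_succ_le hσ⟩) ∨
         u = η (Sum.inl ⟨false :: σ, by simpa using hσ⟩) ∨
         u = η (Sum.inl ⟨true :: σ, by simpa using hσ⟩)) →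
        u ∈ p.support → u = t ∨ u = η (Sum.inr ⟨σ, hσ⟩)) ∧
    v ∈ X t}

/-- `H` is a tripod in `G` with all vertices in `S`, center `c` and feet `f₁, f₂, f₃`:
the union of three paths from `c` to the feet, pairwise disjoint except for `c`,
at least two of which have length at least one. -/
def IsTripodOn {V : Type*} (G : SimpleGraph V) (S : Set V) (H : G.Subgraph)
    (c f₁ f₂ f₃ : V) : Prop :=
  ∃ (W₁ : G.Walk c f₁) (W₂ : G.Walk c f₂) (W₃ : G.Walk c f₃),
    W₁.IsPath ∧ W₂.IsPath ∧ W₃.IsPath ∧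
    (∀ v ∈ W₁.support, v ∈ S) ∧ (∀ v ∈ W₂.support, v ∈ S) ∧ (∀ v ∈ W₃.support, v ∈ S) ∧
    (∀ v, v ∈ W₁.support → v ∈ W₂.support → v = c) ∧
    (∀ v, v ∈ W₁.support → v ∈ W₃.support → v = c) ∧
    (∀ v, v ∈ W₂.support → v ∈ W₃.support → v = c) ∧
    ((1 ≤ W₁.length ∧ 1 ≤ W₂.length) ∨ (1 ≤ W₁.length ∧ 1 ≤ W₃.length) ∨
      (1 ≤ W₂.length ∧ 1 ≤ W₃.length)) ∧
    H = W₁.toSubgraph ⊔ W₂.toSubgraph ⊔ W₃.toSubgraph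

/-- The major vertex `σ` has property `A_{ij}` in the ordered cascade `η` with orderings
`ξ`: there are two disjoint tripods in the `η`-torso at `σ`, with feet as prescribed. -/
def HasPropA {V T : Type*} (G : SimpleGraph V) (Tr : SimpleGraph T) (X : T → Finset V)
    {h s : ℕ} (η : TVert h → T) (I : Finset V) (ξ : MVert h → Fin s → V)
    (σ : List Bool) (hσ : σ.length + 1 ≤ h) (i j : Fin s) : Prop :=
  ∃ (Li Lj : G.Subgraph) (ci cj : V),
    (∃ m₂ m₃ : Fin s, (m₂ = i ∨ m₂ = j) ∧ (m₃ = i ∨ m₃ = j) ∧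
      IsTripodOn G (torsoSet Tr X η I σ hσ) Li ci
        (ξ ⟨σ, Nat.le_of_succ_le hσ⟩ i)
        (ξ ⟨false :: σ, by simpa using hσ⟩ m₂)
        (ξ ⟨true :: σ, by simpa using hσ⟩ m₃)) ∧
    (∃ m₂ m₃ : Fin s, (m₂ = i ∨ m₂ = j) ∧ (m₃ = i ∨ m₃ = j) ∧
      IsTripodOn G (torsoSet Tr X η I σ hσ) Lj cj
        (ξ ⟨σ, Nat.le_of_succ_le hσ⟩ j)
        (ξ ⟨false :: σ, by simpa using hσ⟩ m₂)
        (ξ ⟨true :: σ, by simpa using hσ⟩ m₃)) ∧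
    Disjoint Li.verts Lj.verts

/-- The major vertex `σ` has property `B_{ij}`: there are two tripods `L_i`, `L_j` in the
`η`-torso at `σ`, with feet `v_{m,1}, v_{m,2}, v_{m,3}` where `{v_{i,y}, v_{j,y}}` equals
`{ξ_{t_y} i, ξ_{t_y} j}` for each `y`, which intersect exactly in a path that is the
intersection of the branch of `L_i` to `v_{i,3}` and the branch of `L_j` to `v_{j,2}`,
and which avoids both centers. -/
def HasPropB {V T : Type*} (G : SimpleGraph V) (Tr : SimpleGraph T) (X : T → Finset V)
    {h s : ℕ} (η : TVert h → T) (I : Finset V) (ξ : MVert h → Fin s → V)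
    (σ : List Bool) (hσ : σ.length + 1 ≤ h) (i j : Fin s) : Prop :=
  ∃ (vi vj : Fin 3 → V) (ci cj : V)
    (Wi : ∀ y : Fin 3, G.Walk ci (vi y)) (Wj : ∀ y : Fin 3, G.Walk cj (vj y)),
    (∀ y : Fin 3, ({vi y, vj y} : Set V) =
      {(![ξ ⟨σ, Nat.le_of_succ_le hσ⟩,
          ξ ⟨false :: σ, by simpa using hσ⟩,
          ξ ⟨true :: σ, by simpa using hσ⟩] : Fin 3 → Fin s → V) y i,
       (![ξ ⟨σ, Nat.le_of_succ_le hσ⟩,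
          ξ ⟨false :: σ, by simpa using hσ⟩,
          ξ ⟨true :: σ, by simpa using hσ⟩] : Fin 3 → Fin s → V) y j}) ∧
    (∀ y, (Wi y).IsPath) ∧ (∀ y, (Wj y).IsPath) ∧
    (∀ y, ∀ v ∈ (Wi y).support, v ∈ torsoSet Tr X η I σ hσ) ∧
    (∀ y, ∀ v ∈ (Wj y).support, v ∈ torsoSet Tr X η I σ hσ) ∧
    (∀ y y' : Fin 3, y ≠ y' → ∀ v, v ∈ (Wi y).support → v ∈ (Wi y').support → v = ci) ∧
    (∀ y y' : Fin 3, y ≠ y' → ∀ v, v ∈ (Wj y).support → v ∈ (Wj y').support → v = cj) ∧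
    ((1 ≤ (Wi 0).length ∧ 1 ≤ (Wi 1).length) ∨ (1 ≤ (Wi 0).length ∧ 1 ≤ (Wi 2).length) ∨
      (1 ≤ (Wi 1).length ∧ 1 ≤ (Wi 2).length)) ∧
    ((1 ≤ (Wj 0).length ∧ 1 ≤ (Wj 1).length) ∨ (1 ≤ (Wj 0).length ∧ 1 ≤ (Wj 2).length) ∨
      (1 ≤ (Wj 1).length ∧ 1 ≤ (Wj 2).length)) ∧
    (((Wi 0).toSubgraph ⊔ (Wi 1).toSubgraph ⊔ (Wi 2).toSubgraph) ⊓
      ((Wj 0).toSubgraph ⊔ (Wj 1).toSubgraph ⊔ (Wj 2).toSubgraph)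
        = (Wi 2).toSubgraph ⊓ (Wj 1).toSubgraph) ∧
    ∃ (x y : V) (p : G.Walk x y), p.IsPath ∧
      (Wi 2).toSubgraph ⊓ (Wj 1).toSubgraph = p.toSubgraph ∧
      ci ∉ p.support ∧ cj ∉ p.support

/-- The major vertex `σ` has property `AB_{ij}`: in the `η`-torso at `σ` there are disjoint
paths `L_i, L_j` from `ξ_{t₁}(m)` to `ξ_{t₂}(m)` and disjoint paths `R_i, R_j` from
`ξ_{t₁}(m)` to `ξ_{t₃}(m)`, for `m ∈ {i, j}`. -/
def HasPropAB {V T : Type*} (G : SimpleGraph V) (Tr : SimpleGraph T) (X : T → Finset V)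
    {h s : ℕ} (η : TVert h → T) (I : Finset V) (ξ : MVert h → Fin s → V)
    (σ : List Bool) (hσ : σ.length + 1 ≤ h) (i j : Fin s) : Prop :=
  ∃ (Li : G.Walk (ξ ⟨σ, Nat.le_of_succ_le hσ⟩ i) (ξ ⟨false :: σ, by simpa using hσ⟩ i))
    (Lj : G.Walk (ξ ⟨σ, Nat.le_of_succ_le hσ⟩ j) (ξ ⟨false :: σ, by simpa using hσ⟩ j))
    (Ri : G.Walk (ξ ⟨σ, Nat.le_of_succ_le hσ⟩ i) (ξ ⟨true :: σ, by simpa using hσ⟩ i))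
    (Rj : G.Walk (ξ ⟨σ, Nat.le_of_succ_le hσ⟩ j) (ξ ⟨true :: σ, by simpa using hσ⟩ j)),
    Li.IsPath ∧ Lj.IsPath ∧ Ri.IsPath ∧ Rj.IsPath ∧
    (∀ v ∈ Li.support, v ∈ torsoSet Tr X η I σ hσ) ∧
    (∀ v ∈ Lj.support, v ∈ torsoSet Tr X η I σ hσ) ∧
    (∀ v ∈ Ri.support, v ∈ torsoSet Tr X η I σ hσ) ∧
    (∀ v ∈ Rj.support, v ∈ torsoSet Tr X η I σ hσ) ∧
    (∀ v ∈ Li.support, v ∉ Lj.support) ∧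
    (∀ v ∈ Ri.support, v ∉ Rj.support)

/-- A monotone homeomorphic embedding `T_a ↪ T_h`: the minor root maps to the minor root,
and for every major vertex with trinity `(t₁, t₂, t₃)`, the images of `t₂` and `t₃` are the
left and right neighbors of the (major) image of the vertex. -/
def IsMonotoneEmb (a h : ℕ) (γ : TVert a → TVert h) : Prop :=
  IsHomeoEmb (Tgraph a) (Tgraph h) γ ∧
  γ (Sum.inl ⟨[], Nat.zero_le a⟩) = Sum.inl ⟨[], Nat.zero_le h⟩ ∧
  ∀ (σ : List Bool) (hσ : σ.length + 1 ≤ a),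
    ∃ (τ : List Bool) (hτ : τ.length + 1 ≤ h),
      γ (Sum.inr ⟨σ, hσ⟩) = Sum.inr ⟨τ, hτ⟩ ∧
      γ (Sum.inl ⟨false :: σ, by simpa using hσ⟩) = Sum.inl ⟨false :: τ, by simpa using hτ⟩ ∧
      γ (Sum.inl ⟨true :: σ, by simpa using hσ⟩) = Sum.inl ⟨true :: τ, by simpa using hτ⟩

/-!
Fix an edge `ab` whose ends do not separate `G`. A model of `K_{2,2}` in which `{b}` is a node and
`a` lies in the other node of that colour class would extend to a model of `K_4` or `K_{2,3}`,
because the remaining two nodes can be linked outside `{a, b}`. Hence a maximal connected set `A`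
containing `a` that meets the neighbourhood of `b` at most in `a` has only one neighbour `c ≠ b`,
and `abc` is the triangle on `ab`: the rest of `G` splits into a piece on `a, c` and a piece on
`b, c`. For each piece some connected set outside it joins the two ends, so a `K_{2,2}` in it
would extend to a `K_{2,3}`, and the splitting can be repeated. The resulting binary recursion is
the one that defines `𝒬_k`: a piece with base `ab` is modelled in a copy of `𝒬_i` by gluing the
models of its two parts at the apex.

The ends of an edge `ab` on the unbounded face do not separate. Otherwise both sides of `{a, b}`
decompose in this way. A graph glued from two such pieces along `ab` is outerplanar, because its
vertices can be ordered on a line without crossing edges, and it stays so when the edges from `a`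
and `b` to the apex of either side are added. By maximality these edges are present, so `a` and
`b` have a common neighbour on each side.
-/

section Connectivity

variable {V : Type*} {G : SimpleGraph V} {K X Y : Set V} {x y : V}

/-- Some edge of `G` joins a vertex of `X` to a vertex of `Y`. This is the adjacency of nodes in
a minor model. -/
def SetAdj (G : SimpleGraph V) (X Y : Set V) : Prop :=
  ∃ x ∈ X, ∃ y ∈ Y, G.Adj x y

theorem SetAdj.symm (h : SetAdj G X Y) : SetAdj G Y X := by
  obtain ⟨x, hx, y, hy, hxy⟩ := h
  exact ⟨y, hy, x, hx, hxy.symm⟩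

theorem SetAdj.mono {X' Y' : Set V} (h : SetAdj G X Y) (hX : X ⊆ X') (hY : Y ⊆ Y') :
    SetAdj G X' Y' := by
  obtain ⟨x, hx, y, hy, hxy⟩ := h
  exact ⟨x, hX hx, y, hY hy, hxy⟩

theorem connected_induce_singleton (x : V) : (G.induce {x}).Connected :=
  have : Nonempty ({x} : Set V) := ⟨⟨x, rfl⟩⟩
  ⟨.of_subsingleton⟩

theorem SetAdj.connected_induce_union (h : SetAdj G X Y) (hX : (G.induce X).Connected)
    (hY : (G.induce Y).Connected) : (G.induce (X ∪ Y)).Connected := by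
  obtain ⟨x, hx, y, hy, hxy⟩ := h
  exact SimpleGraph.connected_induce_union hX.preconnected hY.preconnected hx hy hxy

theorem connected_induce_insert (hX : (G.induce X).Connected) (h : SetAdj G X {y}) :
    (G.induce (insert y X)).Connected := by
  rw [← Set.union_singleton]
  exact h.connected_induce_union hX (connected_induce_singleton y)

theorem setAdj_inter_sdiff_of_connected {U : Set V} (hK : (G.induce K).Connected)
    (hx : x ∈ K ∩ U) (hy : y ∈ K \ U) : SetAdj G (K ∩ U) (K \ U) := by
  obtain ⟨p⟩ := hK.preconnected ⟨x, hx.1⟩ ⟨y, hy.1⟩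
  obtain ⟨d, -, hd₁, hd₂⟩ := p.exists_boundary_dart (Subtype.val ⁻¹' U) hx.2 hy.2
  exact ⟨d.fst, ⟨d.fst.2, hd₁⟩, d.snd, ⟨d.snd.2, hd₂⟩, d.adj⟩

theorem exists_component_subset (hx : x ∈ K) :
    ∃ R ⊆ K, x ∈ R ∧ (G.induce R).Connected ∧ ∀ u ∈ R, ∀ v ∈ K, G.Adj u v → v ∈ R := by
  let 𝒞 : Set (Set V) := {C | C ⊆ K ∧ x ∈ C ∧ (G.induce C).Connected}
  have h_singleton : {x} ∈ 𝒞 :=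
    ⟨Set.singleton_subset_iff.2 hx, rfl, connected_induce_singleton x⟩
  have h_conn : (G.induce (⋃₀ 𝒞)).Connected :=
    SimpleGraph.induce_sUnion_connected_of_pairwise_not_disjoint ⟨_, h_singleton⟩
      (fun hC hD => ⟨x, hC.2.1, hD.2.1⟩) fun hC => hC.2.2
  refine ⟨⋃₀ 𝒞, Set.sUnion_subset fun C hC => hC.1, ⟨_, h_singleton, rfl⟩, h_conn, ?_⟩
  rintro u ⟨C, hC, huC⟩ v hv huv
  exact ⟨insert v C, ⟨Set.insert_subset hv hC.1, Or.inr hC.2.1,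
    connected_induce_insert hC.2.2 ⟨u, huC, v, rfl, huv⟩⟩, Or.inl rfl⟩

theorem connected_induce_sdiff_component {R : Set V} (hK : (G.induce K).Connected) (hy : y ∈ K)
    (hRK : R ⊆ K \ {y})
    (hclosed : ∀ u ∈ R, ∀ v ∈ K \ {y}, G.Adj u v → v ∈ R) :
    (G.induce (K \ R)).Connected := by
  have hyR : y ∉ R := fun h => (hRK h).2 rfl
  obtain ⟨T, hTK, hyT, hT, hT_closed⟩ := exists_component_subset (G := G) (K := K \ R) ⟨hy, hyR⟩
  suffices hKT : K \ R ⊆ T by rwa [hKT.antisymm hTK]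
  intro z hz
  by_contra hzT
  obtain ⟨u, ⟨-, huR | huT⟩, v, ⟨hvK, hv⟩, huv⟩ :=
    setAdj_inter_sdiff_of_connected (U := R ∪ T) hK ⟨hy, Or.inr hyT⟩
      ⟨hz.1, fun h => h.elim hz.2 hzT⟩
  · refine hv (Or.inl (hclosed u huR v ⟨hvK, ?_⟩ huv))
    rintro rfl
    exact hv (Or.inr hyT)
  · exact hv (Or.inr (hT_closed u huT v ⟨hvK, fun h => hv (Or.inl h)⟩ huv))

end Connectivity

section ForbiddenMinors

variable {V : Type*} {G : SimpleGraph V} {A B C D E : Set V}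

theorem isMinor_K4_of_setAdj (hA : (G.induce A).Connected) (hB : (G.induce B).Connected)
    (hC : (G.induce C).Connected) (hD : (G.induce D).Connected)
    (dAB : Disjoint A B) (dAC : Disjoint A C) (dAD : Disjoint A D) (dBC : Disjoint B C)
    (dBD : Disjoint B D) (dCD : Disjoint C D)
    (hAB : SetAdj G A B) (hAC : SetAdj G A C) (hAD : SetAdj G A D) (hBC : SetAdj G B C)
    (hBD : SetAdj G B D) (hCD : SetAdj G C D) : IsMinor K4 G := by
  have h_conn : ∀ i, (G.induce (![A, B, C, D] i)).Connected :=
    Fin.forall_fin_succ.2 ⟨hA, by simp [Fin.forall_fin_succ, hB, hC, hD]⟩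
  refine ⟨![A, B, C, D], fun i => Set.nonempty_coe_sort.1 (h_conn i).nonempty, h_conn, ?_, ?_⟩
  · intro i j hij
    fin_cases i <;> fin_cases j <;> first | exact (hij rfl).elim | assumption | (symm; assumption)
  · intro i j hij
    have hij := hij.ne
    fin_cases i <;> fin_cases j <;>
      first | exact (hij rfl).elim | assumption | (apply SetAdj.symm; assumption)

theorem isMinor_K23_of_setAdj (hA : (G.induce A).Connected) (hB : (G.induce B).Connected)
    (hC : (G.induce C).Connected) (hD : (G.induce D).Connected) (hE : (G.induce E).Connected)
    (dAB : Disjoint A B) (dAC : Disjoint A C) (dAD : Disjoint A D) (dAE : Disjoint A E)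
    (dBC : Disjoint B C) (dBD : Disjoint B D) (dBE : Disjoint B E) (dCD : Disjoint C D)
    (dCE : Disjoint C E) (dDE : Disjoint D E)
    (hAC : SetAdj G A C) (hAD : SetAdj G A D) (hAE : SetAdj G A E)
    (hBC : SetAdj G B C) (hBD : SetAdj G B D) (hBE : SetAdj G B E) : IsMinor K23 G := by
  have h_conn : ∀ i, (G.induce (Sum.elim ![A, B] ![C, D, E] i)).Connected := by
    rintro (i | i) <;> fin_cases i <;> assumption
  refine ⟨Sum.elim ![A, B] ![C, D, E],
    fun i => Set.nonempty_coe_sort.1 (h_conn i).nonempty, h_conn, ?_, ?_⟩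
  · rintro (i | i) (j | j) hij <;> fin_cases i <;> fin_cases j <;>
      first | exact (hij rfl).elim | assumption | (symm; assumption)
  · rintro (i | i) (j | j) hij <;> simp only [K23, completeBipartiteGraph_adj] at hij <;>
      fin_cases i <;> fin_cases j <;>
      first | simp at hij; done | assumption | (apply SetAdj.symm; assumption)

end ForbiddenMinors

section NoncrossingOrder

variable {V α : Type*} {G : SimpleGraph V} [LinearOrder α] {φ : V → α} {S X Y : Set V}
  {u v x y p q r s : V}

/-- Placing the vertices of `S` along a line according to `φ`, and drawing each edge of `G[S]` as
an arc above the line, gives a drawing without crossings. This is outerplanarity of `G[S]`,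
certified by an outerplanar drawing. -/
structure IsNoncrossingOn (G : SimpleGraph V) (S : Set V) (φ : V → α) : Prop where
  injOn : S.InjOn φ
  not_crossing : ∀ ⦃u v x y⦄, u ∈ S → v ∈ S → x ∈ S → y ∈ S → G.Adj u v → G.Adj x y →
    φ u < φ x → φ x < φ v → φ v < φ y → False

namespace IsNoncrossingOn

theorem pair {a b : V} (hab : φ a ≠ φ b) : IsNoncrossingOn G {a, b} φ where
  injOn := by
    rintro u (rfl | rfl) v (rfl | rfl) huv
    exacts [rfl, (hab huv).elim, (hab huv.symm).elim, rfl]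
  not_crossing u v x y hu hv hx _ _ _ hux hxv _ := by grind

theorem congr {ψ : V → α} (h : IsNoncrossingOn G S φ) (hψ : S.EqOn φ ψ) :
    IsNoncrossingOn G S ψ where
  injOn := h.injOn.congr hψ
  not_crossing u v x y hu hv hx hy huv hxy := by
    rw [← hψ hu, ← hψ hv, ← hψ hx, ← hψ hy]
    exact h.not_crossing hu hv hx hy huv hxy

theorem strictMono_comp {β : Type*} [LinearOrder β] {g : α → β} (h : IsNoncrossingOn G S φ)
    (hg : StrictMono g) : IsNoncrossingOn G S (g ∘ φ) where
  injOn := hg.injective.comp_injOn h.injOn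
  not_crossing _ _ _ _ hu hv hx hy huv hxy hux hxv hvy :=
    h.not_crossing hu hv hx hy huv hxy (hg.lt_iff_lt.1 hux) (hg.lt_iff_lt.1 hxv)
      (hg.lt_iff_lt.1 hvy)

theorem strictAnti_comp {β : Type*} [LinearOrder β] {g : α → β} (h : IsNoncrossingOn G S φ)
    (hg : StrictAnti g) : IsNoncrossingOn G S (g ∘ φ) where
  injOn := hg.injective.comp_injOn h.injOn
  not_crossing _ _ _ _ hu hv hx hy huv hxy hux hxv hvy :=
    h.not_crossing hy hx hv hu hxy.symm huv.symm (hg.lt_iff_gt.1 hvy) (hg.lt_iff_gt.1 hxv)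
      (hg.lt_iff_gt.1 hux)

theorem union {T : Set V} {a b c : V} (hS : IsNoncrossingOn G S φ) (hT : IsNoncrossingOn G T φ)
    (hle : ∀ u ∈ S, ∀ v ∈ T, φ u ≤ φ v) (hc : c ∈ S ∩ T)
    (hleft : ∀ u ∈ S, φ a ≤ φ u) (hright : ∀ v ∈ T, φ v ≤ φ b)
    (hsep : ∀ u ∈ S, ∀ v ∈ T, G.Adj u v → u = c ∨ v = c ∨ (u = a ∧ v = b)) :
    IsNoncrossingOn G (S ∪ T) φ where
  injOn u hu v hv huv := by
    have hS_inj : ∀ u ∈ S, ∀ v ∈ S, φ u = φ v → u = v := fun u hu v hv => hS.injOn hu hv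
    have hT_inj : ∀ u ∈ T, ∀ v ∈ T, φ u = φ v → u = v := fun u hu v hv => hT.injOn hu hv
    grind
  not_crossing u v x y hu hv hx hy huv hxy hux hxv hvy := by
    have hmin : φ a ≤ φ u := hu.elim (hleft u) fun hu =>
      (hleft c hc.1).trans (hle c hc.1 u hu)
    have hmax : φ y ≤ φ b := hy.elim (fun hy => (hle y hy c hc.2).trans (hright c hc.2)) (hright y)
    have h_edge : ∀ p ∈ S ∪ T, ∀ q ∈ S ∪ T, G.Adj p q → φ p < φ q →
        (p ∈ S ∧ q ∈ S) ∨ (p ∈ T ∧ q ∈ T) ∨ (p = a ∧ q = b) := by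
      grind
    rcases h_edge u hu v hv huv (hux.trans hxv) with ⟨hu, hv⟩ | ⟨hu, hv⟩ | ⟨-, rfl⟩
    · rcases h_edge x hx y hy hxy (hxv.trans hvy) with ⟨hx, hy⟩ | ⟨hx, -⟩ | ⟨rfl, -⟩
      · exact hS.not_crossing hu hv hx hy huv hxy hux hxv hvy
      · exact (hle v hv x hx).not_gt hxv
      · exact hmin.not_gt hux
    · rcases h_edge x hx y hy hxy (hxv.trans hvy) with ⟨hx, -⟩ | ⟨hx, hy⟩ | ⟨rfl, -⟩
      · exact (hle x hx u hu).not_gt hux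
      · exact hT.not_crossing hu hv hx hy huv hxy hux hxv hvy
      · exact hmin.not_gt hux
    · exact hmax.not_gt hvy

variable (h : IsNoncrossingOn G Set.univ φ)
include h

theorem mem_Ioo_of_connected (huv : G.Adj u v) (hY : (G.induce Y).Connected) (huY : u ∉ Y)
    (hvY : v ∉ Y) (hx : x ∈ Y) (hxuv : φ x ∈ Set.Ioo (φ u) (φ v)) (hy : y ∈ Y) :
    φ y ∈ Set.Ioo (φ u) (φ v) := by
  by_contra hyuv
  obtain ⟨p, ⟨-, hpu, hpv⟩, q, ⟨hqY, hq⟩, hpq⟩ :=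
    setAdj_inter_sdiff_of_connected (U := φ ⁻¹' Set.Ioo (φ u) (φ v)) hY ⟨hx, hxuv⟩ ⟨hy, hyuv⟩
  have hqu : φ q ≠ φ u := fun e => huY (h.injOn trivial trivial e ▸ hqY)
  have hqv : φ q ≠ φ v := fun e => hvY (h.injOn trivial trivial e ▸ hqY)
  rcases hqu.lt_or_gt with hqu | hqu
  · exact h.not_crossing trivial trivial trivial trivial hpq.symm huv hqu hpu hpv
  · have hvq : φ v < φ q := hqv.lt_or_gt.resolve_left fun hqv => hq ⟨hqu, hqv⟩
    exact h.not_crossing trivial trivial trivial trivial huv hpq hpu hpv hvq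

theorem not_interleaved (hX : (G.induce X).Connected) (hY : (G.induce Y).Connected)
    (hXY : Disjoint X Y) (hp : p ∈ X) (hq : q ∈ Y) (hr : r ∈ X) (hs : s ∈ Y)
    (hpq : φ p < φ q) (hqr : φ q < φ r) (hrs : φ r < φ s) : False := by
  obtain ⟨u, ⟨huX, hqu, hus⟩, v, ⟨hvX, hv⟩, huv⟩ :=
    setAdj_inter_sdiff_of_connected (U := φ ⁻¹' Set.Ioo (φ q) (φ s)) hX ⟨hr, hqr, hrs⟩
      ⟨hp, fun hp => hpq.asymm hp.1⟩
  have huY : u ∉ Y := Set.disjoint_left.1 hXY huX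
  have hvY : v ∉ Y := Set.disjoint_left.1 hXY hvX
  have hvq : φ v ≠ φ q := fun e => hvY (h.injOn trivial trivial e ▸ hq)
  rcases hvq.lt_or_gt with hvq | hqv
  · exact (h.mem_Ioo_of_connected huv.symm hY hvY huY hq ⟨hvq, hqu⟩ hs).2.asymm hus
  · have hvs : φ v ≠ φ s := fun e => hvY (h.injOn trivial trivial e ▸ hs)
    have hsv : φ s < φ v := hvs.lt_or_gt.resolve_left fun hvs => hv ⟨hqv, hvs⟩
    exact (h.mem_Ioo_of_connected huv hY huY hvY hs ⟨hus, hsv⟩ hq).1.asymm hqu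

theorem not_isMinor_K4 : ¬ IsMinor K4 G := by
  rintro ⟨f, h_nonempty, h_conn, h_disj, h_adj⟩
  choose r hr using h_nonempty
  have hr_inj : Function.Injective (φ ∘ r) := fun i j hij => by
    by_contra hne
    exact Set.disjoint_left.1 (h_disj i j hne) (hr i)
      (h.injOn trivial trivial hij ▸ hr j)
  let σ := Tuple.sort (φ ∘ r)
  have h_mono : StrictMono ((φ ∘ r) ∘ σ) :=
    (Tuple.monotone_sort _).strictMono_of_injective (hr_inj.comp σ.injective)
  have h_union : ∀ i j, i ≠ j → (G.induce (f (σ i) ∪ f (σ j))).Connected := fun i j hij =>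
    SetAdj.connected_induce_union (h_adj _ _ (σ.injective.ne hij)) (h_conn _) (h_conn _)
  refine h.not_interleaved (h_union 0 2 (by decide)) (h_union 1 3 (by decide)) ?_
    (Or.inl (hr _)) (Or.inl (hr _)) (Or.inr (hr _)) (Or.inr (hr _))
    (h_mono (by decide : (0 : Fin 4) < 1)) (h_mono (by decide : (1 : Fin 4) < 2))
    (h_mono (by decide : (2 : Fin 4) < 3))
  simp only [Set.disjoint_union_left, Set.disjoint_union_right]
  constructor <;> constructor <;> exact h_disj _ _ (σ.injective.ne (by decide))

theorem not_mem_Ioo_iff_mem_Ioo {A B C D : Set V} {a b c d : V}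
    (hAC : (G.induce (A ∪ C)).Connected) (hBD : (G.induce (B ∪ D)).Connected)
    (hAD : (G.induce (A ∪ D)).Connected) (hBC : (G.induce (B ∪ C)).Connected)
    (dACBD : Disjoint (A ∪ C) (B ∪ D)) (dADBC : Disjoint (A ∪ D) (B ∪ C))
    (ha : a ∈ A) (hb : b ∈ B) (hc : c ∈ C) (hd : d ∈ D) (hab : φ a < φ b) (hcd : φ c < φ d) :
    ¬(φ c ∈ Set.Ioo (φ a) (φ b) ↔ φ d ∈ Set.Ioo (φ a) (φ b)) := by
  intro hiff
  have hac : φ a ≠ φ c := fun e => Set.disjoint_left.1 dADBC (Or.inl ha)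
    (Or.inr (h.injOn trivial trivial e ▸ hc))
  have had : φ a ≠ φ d := fun e => Set.disjoint_left.1 dACBD (Or.inl ha)
    (Or.inr (h.injOn trivial trivial e ▸ hd))
  have hbc : φ b ≠ φ c := fun e => Set.disjoint_right.1 dACBD (Or.inl hb)
    (Or.inr (h.injOn trivial trivial e ▸ hc))
  have hbd : φ b ≠ φ d := fun e => Set.disjoint_right.1 dADBC (Or.inl hb)
    (Or.inr (h.injOn trivial trivial e ▸ hd))
  have h_cases : (φ a < φ c ∧ φ d < φ b) ∨ φ d < φ a ∨ (φ c < φ a ∧ φ b < φ d) ∨ φ b < φ c := by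
    grind
  rcases h_cases with ⟨hac, hdb⟩ | hda | ⟨hca, hbd⟩ | hbc
  · exact h.not_interleaved hAD hBC dADBC (.inl ha) (.inr hc) (.inr hd) (.inl hb) hac hcd hdb
  · exact h.not_interleaved hAC hBD dACBD (.inr hc) (.inr hd) (.inl ha) (.inl hb) hcd hda hab
  · exact h.not_interleaved hBC hAD dADBC.symm (.inr hc) (.inl ha) (.inl hb) (.inr hd) hca hab hbd
  · exact h.not_interleaved hAC hBD dACBD (.inl ha) (.inl hb) (.inr hc) (.inr hd) hab hbc hcd

theorem not_isMinor_K23 : ¬ IsMinor K23 G := by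
  rintro ⟨f, h_nonempty, h_conn, h_disj, h_adj⟩
  choose r hr using h_nonempty
  have hr_ne : ∀ i j, i ≠ j → φ (r i) ≠ φ (r j) := fun i j hij e =>
    Set.disjoint_left.1 (h_disj i j hij) (hr i) (h.injOn trivial trivial e ▸ hr j)
  have h_union : ∀ i j, (G.induce (f (.inl i) ∪ f (.inr j))).Connected := fun i j =>
    SetAdj.connected_induce_union (h_adj _ _ (by simp [K23])) (h_conn _) (h_conn _)
  have h_union_disj : ∀ i i' j j', i ≠ i' → j ≠ j' →
      Disjoint (f (.inl i) ∪ f (.inr j)) (f (.inl i') ∪ f (.inr j')) := by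
    intro i i' j j' hi hj
    simp only [Set.disjoint_union_left, Set.disjoint_union_right]
    refine ⟨⟨?_, ?_⟩, ?_, ?_⟩ <;> apply h_disj <;> simp [hi, hj]
  obtain ⟨i, i', hii', hi⟩ : ∃ i i', i ≠ i' ∧ φ (r (.inl i)) < φ (r (.inl i')) := by
    rcases (hr_ne (.inl 0) (.inl 1) (by decide)).lt_or_gt with hlt | hlt
    exacts [⟨0, 1, by decide, hlt⟩, ⟨1, 0, by decide, hlt⟩]
  let between (j : Fin 3) : Prop := φ (r (.inr j)) ∈ Set.Ioo (φ (r (.inl i))) (φ (r (.inl i')))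
  obtain ⟨j, j', hj, h_between⟩ : ∃ j j', φ (r (.inr j)) < φ (r (.inr j')) ∧
      (between j ↔ between j') := by
    classical
    obtain ⟨j, j', hne, hjj'⟩ :=
      Fintype.exists_ne_map_eq_of_card_lt (fun j => decide (between j)) (by simp)
    have hiff : between j ↔ between j' := decide_eq_decide.1 hjj'
    rcases (hr_ne (.inr j) (.inr j') (by simp [hne])).lt_or_gt with hlt | hlt
    exacts [⟨j, j', hlt, hiff⟩, ⟨j', j, hlt, hiff.symm⟩]
  have hjj' : j ≠ j' := fun e => hj.ne (e ▸ rfl)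
  exact h.not_mem_Ioo_iff_mem_Ioo (h_union i j) (h_union i' j') (h_union i j') (h_union i' j)
    (h_union_disj i i' j j' hii' hjj') (h_union_disj i i' j' j hii' hjj'.symm)
    (hr _) (hr _) (hr _) (hr _) hi hj h_between

theorem outerplanar : Outerplanar G :=
  ⟨h.not_isMinor_K4, h.not_isMinor_K23⟩

end IsNoncrossingOn

end NoncrossingOrder

section TriangleDecomp

variable {V : Type*} {G G' : SimpleGraph V} {S T T₁ T₂ : Set V} {a b c u v : V}

/-- `G[S]` is a spanning subgraph of a near-triangulation of a polygon (possibly of the degenerate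
polygon with the two vertices `a`, `b`) that has `ab` as a side: `c` is the apex of the triangle
on `ab`, and `S`, `T` are the vertex sets of the two pieces that remain when the side `ab` is
removed. No edge is required to be present. -/
inductive TriangleDecomp (G : SimpleGraph V) : Set V → V → V → Prop
  | edge {a b : V} (hab : a ≠ b) : TriangleDecomp G {a, b} a b
  | triangle {S T : Set V} {a b c : V} (hS : TriangleDecomp G S a c)
      (hT : TriangleDecomp G T b c) (hST : S ∩ T = {c})
      (hsep : ∀ u ∈ S, ∀ v ∈ T, G.Adj u v → u = c ∨ v = c ∨ (u = a ∧ v = b)) :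
      TriangleDecomp G (S ∪ T) a b

namespace TriangleDecomp

theorem left_mem (h : TriangleDecomp G S a b) : a ∈ S := by
  induction h with
  | edge => exact Or.inl rfl
  | triangle _ _ _ _ ihS => exact Or.inl ihS

theorem right_mem (h : TriangleDecomp G S a b) : b ∈ S := by
  cases h with
  | edge => exact Or.inr rfl
  | triangle _ hT => exact Or.inr hT.left_mem

theorem ne (h : TriangleDecomp G S a b) : a ≠ b := by
  induction h with
  | edge hab => exact hab
  | triangle hS hT hST _ ihS =>
    rintro rfl
    exact ihS (Set.mem_singleton_iff.1 (hST ▸ ⟨hS.left_mem, hT.left_mem⟩))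

theorem symm (h : TriangleDecomp G S a b) : TriangleDecomp G S b a := by
  cases h with
  | edge hab =>
    rw [Set.pair_comm]
    exact .edge hab.symm
  | triangle hS hT hST hsep =>
    rw [Set.union_comm]
    refine .triangle hT hS (Set.inter_comm _ _ ▸ hST) fun u hu v hv huv => ?_
    have := hsep v hv u hu huv.symm
    tauto

theorem finite (h : TriangleDecomp G S a b) : S.Finite := by
  induction h with
  | edge => exact Set.toFinite _
  | triangle _ _ _ _ ihS ihT => exact ihS.union ihT

theorem two_le_ncard (h : TriangleDecomp G S a b) : 2 ≤ S.ncard :=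
  (Set.ncard_pair h.ne).ge.trans
    (Set.ncard_le_ncard (Set.pair_subset h.left_mem h.right_mem) h.finite)

theorem mono (h : TriangleDecomp G S a b)
    (hG : ∀ u ∈ S, ∀ v ∈ S, G'.Adj u v → G.Adj u v ∨ s(u, v) = s(a, b)) :
    TriangleDecomp G' S a b := by
  induction h with
  | edge hab => exact .edge hab
  | @triangle S T a b c hS hT hST hsep ihS ihT =>
    have hbS : b ∉ S := fun hb => hT.ne (hST.subset ⟨hb, hT.left_mem⟩)
    have haT : a ∉ T := fun ha => hS.ne (hST.subset ⟨hS.left_mem, ha⟩)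
    refine .triangle (ihS fun u hu v hv huv => ?_) (ihT fun u hu v hv huv => ?_) hST
      fun u hu v hv huv => ?_
    · have := hG u (.inl hu) v (.inl hv) huv
      grind
    · have := hG u (.inr hu) v (.inr hv) huv
      grind
    · have := hG u (.inl hu) v (.inr hv) huv
      grind

theorem exists_isNoncrossingOn (h : TriangleDecomp G S a b) :
    ∃ φ : V → ℚ, IsNoncrossingOn G S φ ∧ φ a = 0 ∧ φ b = 1 ∧ Set.MapsTo φ S (Set.Icc 0 1) := by
  classical
  induction h with
  | @edge a b hab =>
    refine ⟨Pi.single b 1, .pair (by simp [hab]), by simp [hab], by simp, ?_⟩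
    rintro v (rfl | rfl) <;> simp [hab]
  | @triangle S T a b c hS hT hST hsep ihS ihT =>
    obtain ⟨φ, hφ, hφa, hφc, hφS⟩ := ihS
    obtain ⟨ψ, hψ, hψb, hψc, hψT⟩ := ihT
    -- Squeeze the drawing of `S` into `[0, 1/2]` and the reflected drawing of `T` into `[1/2, 1]`.
    let χ : V → ℚ := S.piecewise (fun v => φ v / 2) fun v => 1 - ψ v / 2
    have hχS : ∀ v ∈ S, χ v = φ v / 2 := S.piecewise_eqOn _ _
    have hχT : ∀ v ∈ T, χ v = 1 - ψ v / 2 := fun v hv => by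
      by_cases hvS : v ∈ S
      · obtain rfl : v = c := hST.subset ⟨hvS, hv⟩
        rw [hχS v hvS, hφc, hψc]
        norm_num
      · exact S.piecewise_eqOn_compl _ _ hvS
    have hχa : χ a = 0 := by rw [hχS a hS.left_mem, hφa]; norm_num
    have hχb : χ b = 1 := by rw [hχT b hT.left_mem, hψb]; norm_num
    have hχS_mem : ∀ v ∈ S, 0 ≤ χ v ∧ χ v ≤ 1 / 2 := fun v hv => by
      rw [hχS v hv]
      constructor <;> linarith [(hφS hv).1, (hφS hv).2]
    have hχT_mem : ∀ v ∈ T, 1 / 2 ≤ χ v ∧ χ v ≤ 1 := fun v hv => by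
      rw [hχT v hv]
      constructor <;> linarith [(hψT hv).1, (hψT hv).2]
    have hχS_noncrossing : IsNoncrossingOn G S χ :=
      (hφ.strictMono_comp (g := (· / 2)) fun s t hst => by linarith).congr
        fun v hv => (hχS v hv).symm
    have hχT_noncrossing : IsNoncrossingOn G T χ :=
      (hψ.strictAnti_comp (g := (1 - · / 2)) fun s t hst => by linarith).congr
        fun v hv => (hχT v hv).symm
    refine ⟨χ, hχS_noncrossing.union hχT_noncrossing ?_ (hST.superset rfl) ?_ ?_ hsep, hχa, hχb,
      ?_⟩
    all_goals grind [Set.MapsTo]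

theorem outerplanar (h : TriangleDecomp G Set.univ a b) : Outerplanar G := by
  obtain ⟨φ, hφ, -⟩ := h.exists_isNoncrossingOn
  exact hφ.outerplanar

end TriangleDecomp

end TriangleDecomp

section EdgeSum

variable {V : Type*} {G G' : SimpleGraph V} {S T T₁ T₂ : Set V} {a b c : V}

/-- `G[S ∪ T]` is glued from decomposed pieces on `S` and on `T` along their common base `ab`. -/
structure EdgeSum (G : SimpleGraph V) (S T : Set V) (a b : V) : Prop where
  left : TriangleDecomp G S a b
  right : TriangleDecomp G T a b
  inter_eq : S ∩ T = {a, b}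
  sep : ∀ u ∈ S, ∀ v ∈ T, G.Adj u v → u ∈ T ∨ v ∈ S

/-- Edge-maximality among outerplanar graphs: every missing edge of `G` would destroy
outerplanarity. That `G` itself is outerplanar is not part of the definition. -/
def IsOuterplanarSaturated (G : SimpleGraph V) : Prop :=
  ∀ u v, u ≠ v → ¬ G.Adj u v → ¬ Outerplanar (G ⊔ SimpleGraph.fromEdgeSet {s(u, v)})

namespace EdgeSum

theorem base_symm (h : EdgeSum G S T a b) : EdgeSum G S T b a :=
  ⟨h.left.symm, h.right.symm, Set.pair_comm a b ▸ h.inter_eq, h.sep⟩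

theorem comm (h : EdgeSum G S T a b) : EdgeSum G T S a b :=
  ⟨h.right, h.left, Set.inter_comm S T ▸ h.inter_eq, fun u hu v hv huv =>
    (h.sep v hv u hu huv.symm).symm⟩

theorem rotate (h : EdgeSum G S (T₁ ∪ T₂) a b) (h₁ : TriangleDecomp G T₁ a c)
    (h₂ : TriangleDecomp G T₂ b c) (h₁₂ : T₁ ∩ T₂ = {c})
    (hsep : ∀ u ∈ T₁, ∀ v ∈ T₂, G.Adj u v → u = c ∨ v = c ∨ (u = a ∧ v = b)) :
    EdgeSum G (S ∪ T₂) T₁ a c := by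
  have ha₂ : a ∉ T₂ := fun ha => h₁.ne (h₁₂.subset ⟨h₁.left_mem, ha⟩)
  have hb₁ : b ∉ T₁ := fun hb => h₂.ne (h₁₂.subset ⟨hb, h₂.left_mem⟩)
  have ha₁ := h₁.left_mem
  have hb₂ := h₂.left_mem
  have hc₁ := h₁.right_mem
  have hc₂ := h₂.right_mem
  have haS := h.left.left_mem
  have hbS := h.left.right_mem
  have hS : ∀ v ∈ S, v ∈ T₁ ∪ T₂ → v = a ∨ v = b := fun v hv hvT => h.inter_eq.subset ⟨hv, hvT⟩
  have h_sep := h.sep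
  refine ⟨.triangle h.left h₂.symm ?_ ?_, h₁, ?_, ?_⟩
  · grind
  · intro u hu v hv huv
    have := huv.symm
    grind
  · grind
  · intro u hu v hv huv
    have := huv.symm
    grind

theorem exists_triangleDecomp (h : EdgeSum G S T a b) : ∃ c, TriangleDecomp G (S ∪ T) a c := by
  induction h.right generalizing S with
  | @edge a b =>
    refine ⟨b, ?_⟩
    rw [Set.union_eq_self_of_subset_right (h.inter_eq.superset.trans Set.inter_subset_left)]
    exact h.left
  | @triangle T₁ T₂ _ _ _ h₁ h₂ h₁₂ hsep ih₁ =>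
    rw [Set.union_comm T₁ T₂, ← Set.union_assoc]
    exact ih₁ (h.rotate h₁ h₂ h₁₂ hsep)

theorem outerplanar (h : EdgeSum G S T a b) (hST : S ∪ T = Set.univ) : Outerplanar G := by
  obtain ⟨c, hc⟩ := h.exists_triangleDecomp
  exact TriangleDecomp.outerplanar (hST ▸ hc)

theorem mono (h : EdgeSum G S T a b)
    (hG : ∀ u v, G'.Adj u v → G.Adj u v ∨ s(u, v) = s(a, b)) : EdgeSum G' S T a b where
  left := h.left.mono fun u _ v _ => hG u v
  right := h.right.mono fun u _ v _ => hG u v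
  inter_eq := h.inter_eq
  sep u hu v hv huv := by
    have ha := h.right.left_mem
    have hb := h.right.right_mem
    have := h.sep u hu v hv
    have := hG u v huv
    grind

theorem adj (h : EdgeSum G S T a b) (hST : S ∪ T = Set.univ) (hG : IsOuterplanarSaturated G) :
    G.Adj a b := by
  by_contra hab
  refine hG a b h.left.ne hab (EdgeSum.outerplanar (h.mono fun u v huv => ?_) hST)
  rw [SimpleGraph.sup_adj, SimpleGraph.fromEdgeSet_adj] at huv
  exact huv.imp_right And.left

theorem exists_common_neighbor (h : EdgeSum G S T a b) (hST : S ∪ T = Set.univ)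
    (hG : IsOuterplanarSaturated G) (hT : T ≠ {a, b}) :
    ∃ c ∈ T \ {a, b}, G.Adj a c ∧ G.Adj b c := by
  have h_right := h.right
  cases h_right with
  | edge => exact (hT rfl).elim
  | @triangle T₁ T₂ _ _ c h₁ h₂ h₁₂ hsep =>
    have h' : EdgeSum G S (T₂ ∪ T₁) b a := Set.union_comm T₁ T₂ ▸ h.base_symm
    refine ⟨c, ⟨Or.inl h₁.right_mem, ?_⟩, (h.rotate h₁ h₂ h₁₂ hsep).adj ?_ hG,
      (h'.rotate h₂ h₁ (Set.inter_comm T₁ T₂ ▸ h₁₂) ?_).adj ?_ hG⟩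
    · rintro (rfl | rfl)
      exacts [h₁.ne rfl, h₂.ne rfl]
    · rw [Set.union_assoc, Set.union_comm T₂, hST]
    · intro u hu v hv huv
      have := hsep v hv u hu huv.symm
      tauto
    · rw [Set.union_assoc, hST]

end EdgeSum

end EdgeSum

section Existence

variable {V : Type*} {G : SimpleGraph V} {S A C D E X Y : Set V} {a b c y : V}

/-- No vertex separates a nonempty part of `S \ {a, b}` from `{a, b}` in `G[S]`. When `a` and `b`
are distinct vertices of `S`, this says that `G[S]` becomes 2-connected once the edge `ab` is
added, or `S = {a, b}`. -/
def TwoLinked (G : SimpleGraph V) (S : Set V) (a b : V) : Prop :=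
  ∀ K ⊆ S \ {a, b}, K.Nonempty → ∀ s, ∃ u ∈ K, ∃ v ∈ S \ K, v ≠ s ∧ G.Adj u v

theorem TwoLinked.symm (h : TwoLinked G S a b) : TwoLinked G S b a := by
  rwa [TwoLinked, Set.pair_comm]

theorem IsKConnected.twoLinked [Fintype V] (hG : IsKConnected 2 G) (hab : a ≠ b) :
    TwoLinked G Set.univ a b := by
  classical
  suffices h : ∀ K ⊆ Set.univ \ {a, b}, K.Nonempty → ∀ s ∉ K,
      ∃ u ∈ K, ∃ v ∈ Set.univ \ K, v ≠ s ∧ G.Adj u v by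
    intro K hK hK_nonempty s
    by_cases hs : s ∈ K
    · obtain ⟨u, hu, v, hv, -, huv⟩ := h K hK hK_nonempty a fun ha => (hK ha).2 (.inl rfl)
      exact ⟨u, hu, v, hv, fun hvs => hv.2 (hvs ▸ hs), huv⟩
    · exact h K hK hK_nonempty s hs
  rintro K hK ⟨x, hx⟩ s hs
  have h_conn : (G.induce {s}ᶜ).Connected := by
    have h := hG.2 {s} (by simp)
    rwa [Finset.coe_singleton] at h
  obtain ⟨y, hys, hy⟩ : ∃ y, y ≠ s ∧ y ∉ K := by
    by_cases has : a = s
    · exact ⟨b, fun hbs => hab (has.trans hbs.symm), fun hb => (hK hb).2 (.inr rfl)⟩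
    · exact ⟨a, has, fun ha => (hK ha).2 (.inl rfl)⟩
  obtain ⟨u, ⟨-, hu⟩, v, ⟨hvs, hv⟩, huv⟩ :=
    setAdj_inter_sdiff_of_connected (U := K) h_conn ⟨ne_of_mem_of_not_mem hx hs, hx⟩ ⟨hys, hy⟩
  exact ⟨u, hu, v, ⟨trivial, hv⟩, hvs, huv⟩

/-- A model of `K_{2,2}` in `G` whose nodes `A ∋ a` and `{b}` form one colour class and whose nodes
`C` and `D` form the other. -/
structure IsRootedK22 (G : SimpleGraph V) (a b : V) (A C D : Set V) : Prop where
  root_mem : a ∈ A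
  connected_root : (G.induce A).Connected
  connected_left : (G.induce C).Connected
  connected_right : (G.induce D).Connected
  notMem_root : b ∉ A
  notMem_left : b ∉ C
  notMem_right : b ∉ D
  disjoint_root_left : Disjoint A C
  disjoint_root_right : Disjoint A D
  disjoint_left_right : Disjoint C D
  root_adj_left : SetAdj G A C
  root_adj_right : SetAdj G A D
  adj_left : SetAdj G {b} C
  adj_right : SetAdj G {b} D

/-- `G[S]` is a series composition: all of it but a possible edge `ab` lies in the two pieces on
`insert c A` (containing `a` and `c`) and on `S \ A` (containing `b` and `c`), which share only the
vertex `c`. -/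
structure IsSeriesSplit (G : SimpleGraph V) (S : Set V) (a b c : V) (A : Set V) : Prop where
  subset : A ⊆ S
  left_mem : a ∈ A
  connected : (G.induce A).Connected
  right_notMem : b ∉ A
  mid_mem : c ∈ S \ A
  mid_ne : c ≠ b
  mid_adj : G.Adj c b
  setAdj_mid : SetAdj G A {c}
  sep : ∀ u ∈ A, ∀ v ∈ S \ A, G.Adj u v → v = c ∨ (u = a ∧ v = b)

theorem exists_maximal_connected_of_adj_imp_eq [Finite V] (ha : a ∈ S) (hab : a ≠ b) :
    ∃ A ⊆ S, a ∈ A ∧ b ∉ A ∧ (G.induce A).Connected ∧ (∀ x ∈ A, G.Adj x b → x = a) ∧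
      ∀ x ∈ S \ A, x ≠ b → SetAdj G A {x} → G.Adj x b := by
  let 𝒜 : Set (Set V) := {A | A ⊆ S ∧ a ∈ A ∧ b ∉ A ∧ (G.induce A).Connected ∧
    ∀ x ∈ A, G.Adj x b → x = a}
  have h_singleton : {a} ∈ 𝒜 := ⟨Set.singleton_subset_iff.2 ha, rfl, hab.symm,
    connected_induce_singleton a, fun x hx _ => hx⟩
  obtain ⟨A, ⟨hAS, haA, hbA, hA, hA_adj⟩, hA_max⟩ := 𝒜.toFinite.exists_maximal ⟨_, h_singleton⟩
  refine ⟨A, hAS, haA, hbA, hA, hA_adj, fun x hx hxb hAx => ?_⟩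
  by_contra hxb_adj
  have h_insert : insert x A ∈ 𝒜 := by
    refine ⟨Set.insert_subset hx.1 hAS, .inr haA, ?_, connected_induce_insert hA hAx, ?_⟩
    · rintro (rfl | hbA')
      exacts [hxb rfl, hbA hbA']
    · rintro y (rfl | hy) hyb
      exacts [(hxb_adj hyb).elim, hA_adj y hy hyb]
  exact hx.2 (hA_max h_insert (Set.subset_insert x A) (Set.mem_insert x A))

theorem isRootedK22_singleton {x y : V} (ha : a ∈ A) (hA : (G.induce A).Connected) (hb : b ∉ A)
    (hx : x ∉ A) (hy : y ∉ A) (hxy : x ≠ y) (hAx : SetAdj G A {x}) (hAy : SetAdj G A {y})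
    (hxb : G.Adj x b) (hyb : G.Adj y b) : IsRootedK22 G a b A {x} {y} where
  root_mem := ha
  connected_root := hA
  connected_left := connected_induce_singleton x
  connected_right := connected_induce_singleton y
  notMem_root := hb
  notMem_left := hxb.ne.symm
  notMem_right := hyb.ne.symm
  disjoint_root_left := Set.disjoint_singleton_right.2 hx
  disjoint_root_right := Set.disjoint_singleton_right.2 hy
  disjoint_left_right := Set.disjoint_singleton.2 hxy
  root_adj_left := hAx
  root_adj_right := hAy
  adj_left := ⟨b, rfl, x, rfl, hxb.symm⟩
  adj_right := ⟨b, rfl, y, rfl, hyb.symm⟩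

theorem IsRootedK22.isMinor_K23 (h : IsRootedK22 G a b A C D) (hE : (G.induce E).Connected)
    (hAE : Disjoint A E) (hCE : Disjoint C E) (hDE : Disjoint D E) (hb : b ∉ E)
    (hEa : SetAdj G E {a}) (hEb : SetAdj G E {b}) : IsMinor K23 G :=
  isMinor_K23_of_setAdj h.connected_root (connected_induce_singleton b) h.connected_left
    h.connected_right hE (Set.disjoint_singleton_right.2 h.notMem_root) h.disjoint_root_left
    h.disjoint_root_right hAE (Set.disjoint_singleton_left.2 h.notMem_left)
    (Set.disjoint_singleton_left.2 h.notMem_right) (Set.disjoint_singleton_left.2 hb)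
    h.disjoint_left_right hCE hDE h.root_adj_left h.root_adj_right
    (hEa.symm.mono (Set.singleton_subset_iff.2 h.root_mem) subset_rfl)
    h.adj_left h.adj_right hEb.symm

theorem TwoLinked.exists_isSeriesSplit [Finite V] (h : TwoLinked G S a b) (ha : a ∈ S)
    (hab : a ≠ b) (hS : ¬ S ⊆ {a, b})
    (hK22 : ∀ A ⊆ S, ∀ x ∈ S, ∀ y ∈ S, ¬ IsRootedK22 G a b A {x} {y}) :
    ∃ c A, IsSeriesSplit G S a b c A := by
  obtain ⟨A, hAS, haA, hbA, hA, hA_adj, hA_boundary⟩ :=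
    exists_maximal_connected_of_adj_imp_eq (G := G) ha hab
  have h_boundary_unique : ∀ x ∈ S \ A, ∀ y ∈ S \ A, x ≠ b → y ≠ b → SetAdj G A {x} →
      SetAdj G A {y} → x = y := by
    intro x hx y hy hxb hyb hAx hAy
    by_contra hxy
    exact hK22 A hAS x hx.1 y hy.1 <| isRootedK22_singleton haA hA hbA hx.2 hy.2 hxy hAx hAy
      (hA_boundary x hx hxb hAx) (hA_boundary y hy hyb hAy)
  have h_rest : (S \ (A ∪ {b})).Nonempty := by
    by_contra h_empty
    obtain ⟨x, hxS, hx⟩ := Set.not_subset.1 hS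
    obtain ⟨u, hu, v, hv, hva, huv⟩ := h (S \ {a, b}) subset_rfl ⟨x, hxS, hx⟩ a
    rw [Set.not_nonempty_iff_eq_empty, Set.sdiff_eq_empty] at h_empty
    have huA : u ∈ A := (h_empty hu.1).resolve_right fun hub => hu.2 (.inr hub)
    have hvb : v = b := by
      by_contra hvb
      exact hv.2 ⟨hv.1, by simp [hva, hvb]⟩
    exact hu.2 (Or.inl (hA_adj u huA (hvb ▸ huv)))
  obtain ⟨c, hc, v, hv, hvb, hcv⟩ := h (S \ (A ∪ {b})) (by grind) h_rest b
  have hvA : v ∈ A := by grind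
  have hcA : c ∈ S \ A := by grind
  have hcb : c ≠ b := by grind
  have hAc : SetAdj G A {c} := ⟨v, hvA, c, rfl, hcv.symm⟩
  refine ⟨c, A, hAS, haA, hA, hbA, hcA, hcb, hA_boundary c hcA hcb hAc, hAc, ?_⟩
  intro x hx y hy hxy
  by_cases hyb : y = b
  · exact Or.inr ⟨hA_adj x hx (hyb ▸ hxy), hyb⟩
  · exact Or.inl (h_boundary_unique y hy c hcA hyb hcb ⟨x, hx, y, rfl, hxy⟩ hAc)

namespace IsSeriesSplit

variable (h : IsSeriesSplit G S a b c A)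
include h

theorem twoLinked_left (hS : TwoLinked G S a b) : TwoLinked G (insert c A) a c := by
  have h_sub := h.subset
  have h_sep := h.sep
  have hb := h.right_notMem
  intro K hK hK_nonempty s
  have hKA : K ⊆ A := by grind
  obtain ⟨u, hu, v, hv, hvs, huv⟩ := hS K (by grind) hK_nonempty s
  exact ⟨u, hu, v, by grind, hvs, huv⟩

theorem twoLinked_right (hS : TwoLinked G S a b) : TwoLinked G (S \ A) b c := by
  have h_sep := h.sep
  have ha := h.left_mem
  intro K hK hK_nonempty s
  obtain ⟨u, hu, v, hv, hvs, huv⟩ := hS K (by grind) hK_nonempty s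
  have := huv.symm
  exact ⟨u, hu, v, by grind, hvs, huv⟩

theorem triangleDecomp (hL : TriangleDecomp G (insert c A) a c)
    (hR : TriangleDecomp G (S \ A) b c) : TriangleDecomp G S a b := by
  have h_sub := h.subset
  have h_sep := h.sep
  have h_mid := h.mid_mem
  have h_union : insert c A ∪ S \ A = S := by grind
  rw [← h_union]
  exact .triangle hL hR (by grind) (by grind)

end IsSeriesSplit

theorem TriangleDecomp.of_connected_disjoint [Finite V] (hG : ¬ IsMinor K23 G)
    (hS : TwoLinked G S a b) (ha : a ∈ S) (hb : b ∈ S) (hab : a ≠ b)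
    (hE : (G.induce E).Connected) (hES : Disjoint E S) (hEa : SetAdj G E {a})
    (hEb : SetAdj G E {b}) : TriangleDecomp G S a b := by
  induction hn : S.ncard using Nat.strong_induction_on generalizing S a b E with | h n ih
  subst hn
  by_cases hSab : S ⊆ {a, b}
  · rw [hSab.antisymm (Set.pair_subset ha hb)]
    exact .edge hab
  have hK22 : ∀ A ⊆ S, ∀ x ∈ S, ∀ y ∈ S, ¬ IsRootedK22 G a b A {x} {y} := by
    intro A hA x hx y hy h
    have hE_disj : ∀ X ⊆ S, Disjoint X E := fun X hX => (hES.mono_right hX).symm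
    exact hG <| h.isMinor_K23 hE (hE_disj A hA) (hE_disj _ (Set.singleton_subset_iff.2 hx))
      (hE_disj _ (Set.singleton_subset_iff.2 hy)) (hES.notMem_of_mem_right hb) hEa hEb
  obtain ⟨c, A, hA⟩ := hS.exists_isSeriesSplit ha hab hSab hK22
  have hbL : b ∉ insert c A := by
    rintro (rfl | hb)
    exacts [hA.mid_ne rfl, hA.right_notMem hb]
  have hLS : insert c A ⊆ S := Set.insert_subset hA.mid_mem.1 hA.subset
  apply hA.triangleDecomp
  · refine ih (insert c A).ncard
      (Set.ncard_lt_ncard (hLS.ssubset_of_mem_notMem hb hbL)) (hA.twoLinked_left hS)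
      (.inr hA.left_mem) (.inl rfl) (ne_of_mem_of_not_mem hA.left_mem hA.mid_mem.2)
      (connected_induce_insert hE hEb)
      (Set.disjoint_insert_left.2 ⟨hbL, hES.mono_right hLS⟩)
      (hEa.mono (Set.subset_insert b E) subset_rfl) ⟨b, .inl rfl, c, rfl, hA.mid_adj.symm⟩ rfl
  · have hAE : SetAdj G A E :=
      hEa.symm.mono (Set.singleton_subset_iff.2 hA.left_mem) subset_rfl
    refine ih (S \ A).ncard
      (Set.ncard_lt_ncard (Set.sdiff_subset.ssubset_of_mem_notMem ha fun h => h.2 hA.left_mem))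
      (hA.twoLinked_right hS) ⟨hb, hA.right_notMem⟩ hA.mid_mem hA.mid_ne.symm
      (hAE.connected_induce_union hA.connected hE)
      (Set.disjoint_union_left.2 ⟨Set.disjoint_sdiff_right, hES.mono_right Set.sdiff_subset⟩)
      (hEb.mono Set.subset_union_right subset_rfl)
      (hA.setAdj_mid.mono Set.subset_union_left subset_rfl) rfl

theorem IsRootedK22.not_setAdj_left_right (h : IsRootedK22 G a b A C D) (hG : ¬ IsMinor K4 G)
    (hab : G.Adj a b) : ¬ SetAdj G C D := fun hCD =>
  hG <| isMinor_K4_of_setAdj h.connected_root (connected_induce_singleton b) h.connected_left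
    h.connected_right (Set.disjoint_singleton_right.2 h.notMem_root) h.disjoint_root_left
    h.disjoint_root_right (Set.disjoint_singleton_left.2 h.notMem_left)
    (Set.disjoint_singleton_left.2 h.notMem_right) h.disjoint_left_right
    ⟨a, h.root_mem, b, rfl, hab⟩ h.root_adj_left h.root_adj_right h.adj_left h.adj_right hCD

theorem IsRootedK22.insert_left (h : IsRootedK22 G a b A C D) (hCy : SetAdj G C {y})
    (hyA : y ∉ A) (hyD : y ∉ D) (hyb : y ≠ b) : IsRootedK22 G a b A (insert y C) D :=
  { h with
    connected_left := connected_induce_insert h.connected_left hCy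
    notMem_left := by
      rintro (hby | hb)
      exacts [hyb hby.symm, h.notMem_left hb]
    disjoint_root_left := Set.disjoint_insert_right.2 ⟨hyA, h.disjoint_root_left⟩
    disjoint_left_right := Set.disjoint_insert_left.2 ⟨hyD, h.disjoint_left_right⟩
    root_adj_left := h.root_adj_left.mono subset_rfl (Set.subset_insert y C)
    adj_left := h.adj_left.mono subset_rfl (Set.subset_insert y C) }

theorem IsRootedK22.transfer (h : IsRootedK22 G a b (A ∪ X) C D) (ha : a ∈ A)
    (hA : (G.induce A).Connected) (hX : (G.induce X).Connected) (hAX : Disjoint A X)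
    (hCX : SetAdj G C X) (h_adj : SetAdj G A X) (hAD : SetAdj G A D) :
    IsRootedK22 G a b A (C ∪ X) D :=
  have h_left := Set.disjoint_union_left.1 h.disjoint_root_left
  have h_right := Set.disjoint_union_left.1 h.disjoint_root_right
  { h with
    root_mem := ha
    connected_root := hA
    connected_left := hCX.connected_induce_union h.connected_left hX
    notMem_root := fun hb => h.notMem_root (.inl hb)
    notMem_left := by
      rintro (hb | hb)
      exacts [h.notMem_left hb, h.notMem_root (.inr hb)]
    disjoint_root_left := Set.disjoint_union_right.2 ⟨h_left.1, hAX⟩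
    disjoint_root_right := h_right.1
    disjoint_left_right := Set.disjoint_union_left.2 ⟨h.disjoint_left_right, h_right.2⟩
    root_adj_left := h_adj.mono subset_rfl Set.subset_union_right
    root_adj_right := hAD
    adj_left := h.adj_left.mono subset_rfl Set.subset_union_left }

theorem IsRootedK22.not_setAdj_rest (h : IsRootedK22 G a b (A ∪ X) C D) (hG : ¬ IsMinor K23 G)
    (hab : G.Adj a b) (ha : a ∈ A) (hA : (G.induce A).Connected) (hX : (G.induce X).Connected)
    (hAX : Disjoint A X) (hCX : SetAdj G C X) (h_adj : SetAdj G A X) : ¬ SetAdj G X D := by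
  intro hXD
  have h_left := Set.disjoint_union_left.1 h.disjoint_root_left
  have h_right := Set.disjoint_union_left.1 h.disjoint_root_right
  exact hG <| isMinor_K23_of_setAdj hX (connected_induce_singleton b) h.connected_left
    h.connected_right hA (Set.disjoint_singleton_right.2 fun hb => h.notMem_root (.inr hb))
    h_left.2 h_right.2 hAX.symm (Set.disjoint_singleton_left.2 h.notMem_left)
    (Set.disjoint_singleton_left.2 h.notMem_right)
    (Set.disjoint_singleton_left.2 fun hb => h.notMem_root (.inl hb)) h.disjoint_left_right
    h_left.1.symm h_right.1.symm hCX.symm hXD h_adj.symm h.adj_left h.adj_right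
    ⟨b, rfl, a, ha, hab.symm⟩

theorem IsRootedK22.exists_union_left (h : IsRootedK22 G a b A C D) (hG : ¬ IsMinor K23 G)
    (hab : G.Adj a b) (hy : y ∈ A) (hya : y ≠ a) (hCy : SetAdj G C {y}) :
    ∃ A' X, y ∈ X ∧ IsRootedK22 G a b A' (C ∪ X) D := by
  obtain ⟨A', hA'_sub, haA', hA', h_closed⟩ :=
    exists_component_subset (G := G) (K := A \ {y}) ⟨h.root_mem, hya.symm⟩
  have hA'A : A' ⊆ A := hA'_sub.trans Set.sdiff_subset
  have hyX : y ∈ A \ A' := ⟨hy, fun hyA' => (hA'_sub hyA').2 rfl⟩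
  have hX : (G.induce (A \ A')).Connected :=
    connected_induce_sdiff_component h.connected_root hy hA'_sub h_closed
  have h_adj : SetAdj G A' (A \ A') :=
    (setAdj_inter_sdiff_of_connected h.connected_root ⟨h.root_mem, haA'⟩ hyX).mono
      Set.inter_subset_right subset_rfl
  have hCX : SetAdj G C (A \ A') := hCy.mono subset_rfl (Set.singleton_subset_iff.2 hyX)
  have h' : IsRootedK22 G a b (A' ∪ A \ A') C D := by rwa [Set.union_sdiff_cancel hA'A]
  obtain ⟨u, hu, v, hv, huv⟩ := h'.root_adj_right
  rcases hu with hu | hu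
  · exact ⟨A', A \ A', hyX, h'.transfer haA' hA' hX Set.disjoint_sdiff_right hCX h_adj
      ⟨u, hu, v, hv, huv⟩⟩
  · exact (h'.not_setAdj_rest hG hab haA' hA' hX Set.disjoint_sdiff_right hCX h_adj
      ⟨u, hu, v, hv, huv⟩).elim

theorem not_isRootedK22_of_connected_compl [Finite V] (hG : Outerplanar G) (hab : G.Adj a b)
    (hconn : (G.induce {a, b}ᶜ).Connected) : ¬ IsRootedK22 G a b A C D := by
  intro h₀
  let 𝒞 : Set (Set V) := {C | ∃ A D, IsRootedK22 G a b A C D}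
  obtain ⟨C, ⟨A, D, h⟩, hC_max⟩ := 𝒞.toFinite.exists_maximal ⟨C, A, D, h₀⟩
  have h_compl {B : Set V} {x : V} (hAB : Disjoint A B) (hb : b ∉ B) (hx : x ∈ B) :
      x ∈ ({a, b} : Set V)ᶜ := by
    rintro (rfl | rfl)
    exacts [hAB.notMem_of_mem_left h.root_mem hx, hb hx]
  obtain ⟨-, -, x, hxC, -⟩ := h.root_adj_left
  obtain ⟨-, -, w, hwD, -⟩ := h.root_adj_right
  obtain ⟨z, ⟨-, hz⟩, y, ⟨hyab, hyC⟩, hzy⟩ := setAdj_inter_sdiff_of_connected hconn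
    ⟨h_compl h.disjoint_root_left h.notMem_left hxC, hxC⟩
    ⟨h_compl h.disjoint_root_right h.notMem_right hwD,
      h.disjoint_left_right.notMem_of_mem_right hwD⟩
  have hCy : SetAdj G C {y} := ⟨z, hz, y, rfl, hzy⟩
  by_cases hyA : y ∈ A
  · obtain ⟨A', X, hyX, h'⟩ := h.exists_union_left hG.2 hab hyA (fun hya => hyab (.inl hya)) hCy
    exact hyC (hC_max ⟨A', D, h'⟩ Set.subset_union_left (.inr hyX))
  by_cases hyD : y ∈ D
  · exact h.not_setAdj_left_right hG.1 hab (hCy.mono subset_rfl (Set.singleton_subset_iff.2 hyD))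
  · have h' := h.insert_left hCy hyA hyD fun hyb => hyab (.inr hyb)
    exact hyC (hC_max ⟨A, D, h'⟩ (Set.subset_insert y C) (.inl rfl))

theorem TriangleDecomp.of_connected_compl [Finite V] (hG : Outerplanar G)
    (hlink : TwoLinked G Set.univ a b) (hab : G.Adj a b)
    (hconn : (G.induce {a, b}ᶜ).Connected) : TriangleDecomp G Set.univ a b := by
  have h_univ : ¬ Set.univ ⊆ ({a, b} : Set V) := by
    obtain ⟨x, hx⟩ := hconn.nonempty
    exact fun h => hx (h (Set.mem_univ x))
  obtain ⟨c, A, hA⟩ := hlink.exists_isSeriesSplit (Set.mem_univ a) hab.ne h_univ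
    fun A _ x _ y _ => not_isRootedK22_of_connected_compl hG hab hconn
  have hac : a ≠ c := ne_of_mem_of_not_mem hA.left_mem hA.mid_mem.2
  apply hA.triangleDecomp
  · refine .of_connected_disjoint hG.2 (hA.twoLinked_left hlink) (.inr hA.left_mem) (.inl rfl) hac
      (connected_induce_singleton b) (Set.disjoint_singleton_left.2 ?_)
      ⟨b, rfl, a, rfl, hab.symm⟩ ⟨b, rfl, c, rfl, hA.mid_adj.symm⟩
    rintro (hbc | hb)
    exacts [hA.mid_ne hbc.symm, hA.right_notMem hb]
  · exact .of_connected_disjoint hG.2 (hA.twoLinked_right hlink) ⟨trivial, hA.right_notMem⟩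
      hA.mid_mem hA.mid_ne.symm hA.connected Set.disjoint_sdiff_right
      ⟨a, hA.left_mem, b, rfl, hab⟩ hA.setAdj_mid

theorem TwoLinked.setAdj_left (h : TwoLinked G Set.univ a b) (hX : X ⊆ {a, b}ᶜ)
    (hX_nonempty : X.Nonempty) (h_closed : ∀ u ∈ X, ∀ v ∈ ({a, b} : Set V)ᶜ, G.Adj u v → v ∈ X) :
    SetAdj G X {a} := by
  obtain ⟨u, hu, v, hv, hvb, huv⟩ := h X (fun x hx => ⟨trivial, hX hx⟩) hX_nonempty b
  have hva : v = a := by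
    by_contra hva
    exact hv.2 (h_closed u hu v (by simp [hva, hvb]) huv)
  exact ⟨u, hu, v, hva, huv⟩

theorem TwoLinked.of_closed (h : TwoLinked G Set.univ a b)
    (h_closed : ∀ u ∈ S \ {a, b}, ∀ v, G.Adj u v → v ∈ S) : TwoLinked G S a b := by
  intro K hK hK_nonempty s
  obtain ⟨u, hu, v, hv, hvs, huv⟩ := h K (fun x hx => ⟨trivial, (hK hx).2⟩) hK_nonempty s
  exact ⟨u, hu, v, ⟨h_closed u (hK hu) v huv, hv.2⟩, hvs, huv⟩

theorem TwoLinked.edgeSum_of_closed [Finite V] (h : TwoLinked G Set.univ a b) (hab : a ≠ b)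
    (hG : ¬ IsMinor K23 G) (hX : X ⊆ {a, b}ᶜ) (hX_conn : (G.induce X).Connected)
    (hX_closed : ∀ u ∈ X, ∀ v ∈ ({a, b} : Set V)ᶜ, G.Adj u v → v ∈ X)
    (hY : Y ⊆ {a, b}ᶜ) (hY_conn : (G.induce Y).Connected)
    (hY_closed : ∀ u ∈ Y, ∀ v ∈ ({a, b} : Set V)ᶜ, G.Adj u v → v ∈ Y) (hYX : Disjoint Y X) :
    EdgeSum G (X ∪ {a, b}) Xᶜ a b where
  left := by
    have hY_nonempty : Y.Nonempty := Set.nonempty_coe_sort.1 hY_conn.nonempty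
    refine .of_connected_disjoint hG (h.of_closed ?_) (by simp) (by simp) hab hY_conn
      (Set.disjoint_union_right.2 ⟨hYX, Set.disjoint_left.2 hY⟩)
      (h.setAdj_left hY hY_nonempty hY_closed)
      (h.symm.setAdj_left (Set.pair_comm a b ▸ hY) hY_nonempty (Set.pair_comm a b ▸ hY_closed))
    rintro u ⟨hu | hu, hu_base⟩ v huv
    · by_cases hv : v ∈ ({a, b} : Set V)
      exacts [.inr hv, .inl (hX_closed u hu v hv huv)]
    · exact (hu_base hu).elim
  right := by
    have hX_nonempty : X.Nonempty := Set.nonempty_coe_sort.1 hX_conn.nonempty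
    refine .of_connected_disjoint hG (h.of_closed ?_) (fun ha => hX ha (.inl rfl))
      (fun hb => hX hb (.inr rfl)) hab hX_conn disjoint_compl_right
      (h.setAdj_left hX hX_nonempty hX_closed)
      (h.symm.setAdj_left (Set.pair_comm a b ▸ hX) hX_nonempty (Set.pair_comm a b ▸ hX_closed))
    exact fun u hu v huv hv => hu.1 (hX_closed v hv u hu.2 huv.symm)
  inter_eq := by
    rw [Set.union_inter_distrib_right, Set.inter_compl_self, Set.empty_union]
    exact Set.inter_eq_left.2 fun z hz hzX => hX hzX hz
  sep := by
    rintro u (hu | hu) v hv huv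
    · by_cases hv_base : v ∈ ({a, b} : Set V)
      exacts [.inr (.inr hv_base), (hv (hX_closed u hu v hv_base huv)).elim]
    · exact .inl fun huX => hX huX hu

theorem TwoLinked.exists_edgeSum [Finite V] (h : TwoLinked G Set.univ a b) (hab : a ≠ b)
    (hG : ¬ IsMinor K23 G) (hne : ({a, b} : Set V)ᶜ.Nonempty)
    (hconn : ¬ (G.induce {a, b}ᶜ).Connected) :
    ∃ P Q, EdgeSum G P Q a b ∧ P ∪ Q = Set.univ ∧ P ≠ {a, b} ∧ Q ≠ {a, b} := by
  obtain ⟨x, hx⟩ := hne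
  obtain ⟨X, hX, hxX, hX_conn, hX_closed⟩ := exists_component_subset (G := G) hx
  obtain ⟨y, hy, hyX⟩ : ({a, b}ᶜ \ X).Nonempty := by
    by_contra h_empty
    rw [Set.not_nonempty_iff_eq_empty, Set.sdiff_eq_empty] at h_empty
    exact hconn (h_empty.antisymm hX ▸ hX_conn)
  obtain ⟨Y, hY, hyY, hY_conn, hY_closed⟩ := exists_component_subset (G := G) hy
  have hYX : Disjoint Y X := by
    refine Set.disjoint_left.2 fun z hzY hzX => ?_
    obtain ⟨u, ⟨-, hu⟩, v, ⟨hvY, hv⟩, huv⟩ :=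
      setAdj_inter_sdiff_of_connected hY_conn ⟨hzY, hzX⟩ ⟨hyY, hyX⟩
    exact hv (hX_closed u hu v (hY hvY) huv)
  refine ⟨X ∪ {a, b}, Xᶜ,
    h.edgeSum_of_closed hab hG hX hX_conn hX_closed hY hY_conn hY_closed hYX, ?_, ?_, ?_⟩
  · rw [Set.union_right_comm, Set.union_compl_self, Set.univ_union]
  · exact fun h_eq => hx (h_eq ▸ .inl hxX)
  · exact fun h_eq => hy (h_eq ▸ hyX)

theorem IsOuterplanarSaturated.connected_compl [Finite V] (hG : IsOuterplanarSaturated G)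
    (hK23 : ¬ IsMinor K23 G) (hlink : TwoLinked G Set.univ a b) (hab : a ≠ b)
    (hout : ∃! c, G.Adj a c ∧ G.Adj b c) : (G.induce {a, b}ᶜ).Connected := by
  by_contra hconn
  obtain ⟨x, ⟨hax, hbx⟩, hx_unique⟩ := hout
  have hx : x ∈ ({a, b} : Set V)ᶜ := by
    rintro (rfl | rfl)
    exacts [hax.ne rfl, hbx.ne rfl]
  obtain ⟨P, Q, hPQ, h_union, hP, hQ⟩ := hlink.exists_edgeSum hab hK23 ⟨x, hx⟩ hconn
  obtain ⟨c, ⟨hcQ, hc⟩, hcab⟩ := hPQ.exists_common_neighbor h_union hG hQ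
  obtain ⟨d, ⟨hdP, -⟩, hdab⟩ :=
    hPQ.comm.exists_common_neighbor (Set.union_comm P Q ▸ h_union) hG hP
  have hdc : d = c := (hx_unique d hdab).trans (hx_unique c hcab).symm
  exact hc (hPQ.inter_eq.subset ⟨hdc ▸ hdP, hcQ⟩)

end Existence

section Qgraph

variable {k : ℕ} {σ : List Bool}

theorem qbase_false_cons (hσ : σ.length < k) :
    qbase k (false :: σ) = ((qbase k σ).1, Sum.inr ⟨σ, hσ⟩) := by
  simp [qbase, hσ]

theorem qbase_true_cons (hσ : σ.length < k) :
    qbase k (true :: σ) = ((qbase k σ).2, Sum.inr ⟨σ, hσ⟩) := by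
  simp [qbase, hσ]

theorem length_lt_of_mem_qbase {τ : {l : List Bool // l.length < k}} (hσ : σ.length ≤ k)
    (hτ : Sum.inr τ ∈ ({(qbase k σ).1, (qbase k σ).2} : Set (QVert k))) :
    τ.1.length < σ.length := by
  induction σ with
  | nil => simp [qbase] at hτ
  | cons i σ ih =>
    have h_apex : τ.1 = σ → τ.1.length < (i :: σ).length := by
      intro h
      simp [h]
    have h_ih := fun h => (ih (Nat.le_of_succ_le hσ) h).trans (Nat.lt_succ_self σ.length)
    cases i with
    | false =>
      rw [qbase_false_cons hσ] at hτ
      rcases hτ with hτ | hτ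
      exacts [h_ih (.inl hτ), h_apex (congrArg Subtype.val (Sum.inr_injective hτ))]
    | true =>
      rw [qbase_true_cons hσ] at hτ
      rcases hτ with hτ | hτ
      exacts [h_ih (.inr hτ), h_apex (congrArg Subtype.val (Sum.inr_injective hτ))]

theorem Qgraph_adj_apex {x : QVert k} (hσ : σ.length < k)
    (hx : x ∈ ({(qbase k σ).1, (qbase k σ).2} : Set (QVert k))) :
    (Qgraph k).Adj x (Sum.inr ⟨σ, hσ⟩) := by
  refine (SimpleGraph.fromEdgeSet_adj _).2 ⟨.inr ⟨σ, hσ, ?_⟩, ?_⟩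
  · rcases hx with rfl | rfl
    exacts [.inl Sym2.eq_swap, .inr Sym2.eq_swap]
  · rintro rfl
    exact (length_lt_of_mem_qbase hσ.le hx).false

theorem Qgraph_adj_qbase (hσ : σ.length ≤ k) : (Qgraph k).Adj (qbase k σ).1 (qbase k σ).2 := by
  cases σ with
  | nil => simp [Qgraph, qbase]
  | cons i σ =>
    cases i with
    | false =>
      rw [qbase_false_cons hσ]
      exact Qgraph_adj_apex hσ (.inl rfl)
    | true =>
      rw [qbase_true_cons hσ]
      exact Qgraph_adj_apex hσ (.inr rfl)

/-- The vertex set of the copy of `𝒬_{k - |σ|}` whose base edge is `qbase k σ`. Addresses are read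
from the end, so the vertices other than the two ends of the base edge are those whose address
has `σ` as a suffix. -/
def qregion (k : ℕ) (σ : List Bool) : Set (QVert k) :=
  {(qbase k σ).1, (qbase k σ).2} ∪ Sum.inr '' {τ | σ <:+ τ.1}

theorem qregion_cons_subset (hσ : σ.length < k) (i : Bool) :
    qregion k (i :: σ) ⊆ qregion k σ := by
  have h_apex : Sum.inr ⟨σ, hσ⟩ ∈ qregion k σ := .inr ⟨⟨σ, hσ⟩, List.suffix_rfl, rfl⟩
  refine Set.union_subset (Set.pair_subset ?_ ?_) ?_
  · cases i with
    | false =>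
      rw [qbase_false_cons hσ]
      exact .inl (.inl rfl)
    | true =>
      rw [qbase_true_cons hσ]
      exact .inl (.inr rfl)
  · cases i with
    | false => rwa [qbase_false_cons hσ]
    | true => rwa [qbase_true_cons hσ]
  · rintro _ ⟨τ, hτ, rfl⟩
    exact .inr ⟨τ, (List.suffix_cons i σ).trans hτ, rfl⟩

theorem qregion_false_inter_qregion_true (hσ : σ.length < k) :
    qregion k (false :: σ) ∩ qregion k (true :: σ) ⊆ {Sum.inr ⟨σ, hσ⟩} := by
  have h_short {i : Bool} {τ : {l : List Bool // l.length < k}} (hτ : i :: σ <:+ τ.1) :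
      Sum.inr τ ∉ ({(qbase k σ).1, (qbase k σ).2} : Set (QVert k)) := fun h =>
    (length_lt_of_mem_qbase hσ.le h).not_gt hτ.length_le
  rw [qregion, qregion, qbase_false_cons hσ, qbase_true_cons hσ]
  rintro x ⟨(rfl | rfl) | ⟨τ, hτ, rfl⟩, (hx | hx) | ⟨τ', hτ', hx⟩⟩
  · exact ((Qgraph_adj_qbase hσ.le).ne hx).elim
  · exact hx
  · exact (h_short hτ' (.inl hx)).elim
  · rfl
  · rfl
  · rfl
  · exact (h_short hτ (.inr hx)).elim
  · exact hx
  · obtain rfl := Sum.inr_injective hx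
    have h_eq := (List.suffix_of_suffix_length_le hτ hτ' le_rfl).eq_of_length rfl
    cases h_eq

end Qgraph

section QModel

variable {V : Type*} {G : SimpleGraph V} {k : ℕ} {σ : List Bool} {S T : Set V} {a b c : V}
  {f f₁ f₂ : V → Set (QVert k)}

/-- `f` is a model of `G[S]` in the subgraph of `𝒬_k` induced on `qregion k σ`, with the ends of the
base edge `qbase k σ` in the nodes of `a` and `b`. The nodes of the vertices outside `S` are empty,
so that models on different sets can be united. -/
structure IsQModel (G : SimpleGraph V) (k : ℕ) (σ : List Bool) (S : Set V) (a b : V)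
    (f : V → Set (QVert k)) : Prop where
  connected : ∀ v ∈ S, ((Qgraph k).induce (f v)).Connected
  eq_empty : ∀ v ∉ S, f v = ∅
  eq_of_mem : ∀ ⦃x u v⦄, x ∈ f u → x ∈ f v → u = v
  setAdj : ∀ u ∈ S, ∀ v ∈ S, G.Adj u v → SetAdj (Qgraph k) (f u) (f v)
  subset : ∀ v, f v ⊆ qregion k σ
  fst_mem : (qbase k σ).1 ∈ f a
  snd_mem : (qbase k σ).2 ∈ f b

theorem isQModel_pair (hσ : σ.length ≤ k) (hab : a ≠ b) :
    IsQModel G k σ {a, b} a b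
      fun v => {x | v = a ∧ x = (qbase k σ).1 ∨ v = b ∧ x = (qbase k σ).2} where
  connected := by
    rintro v (rfl | rfl)
    · have h_node : {x | v = v ∧ x = (qbase k σ).1 ∨ v = b ∧ x = (qbase k σ).2} =
          {(qbase k σ).1} := by
        ext x
        simp [hab]
      rw [h_node]
      exact connected_induce_singleton _
    · have h_node : {x | v = a ∧ x = (qbase k σ).1 ∨ v = v ∧ x = (qbase k σ).2} =
          {(qbase k σ).2} := by
        ext x
        simp [hab.symm]
      rw [h_node]
      exact connected_induce_singleton _
  eq_empty := by
    intro v hv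
    ext x
    simp_all
  eq_of_mem := by
    have hne := (Qgraph_adj_qbase hσ).ne
    rintro x u v (⟨rfl, rfl⟩ | ⟨rfl, rfl⟩) (⟨rfl, hx⟩ | ⟨rfl, hx⟩)
    exacts [rfl, (hne hx).elim, (hne hx.symm).elim, rfl]
  setAdj := by
    have h_base : SetAdj (Qgraph k) {x | a = a ∧ x = (qbase k σ).1 ∨ a = b ∧ x = (qbase k σ).2}
        {x | b = a ∧ x = (qbase k σ).1 ∨ b = b ∧ x = (qbase k σ).2} :=
      ⟨_, .inl ⟨rfl, rfl⟩, _, .inr ⟨rfl, rfl⟩, Qgraph_adj_qbase hσ⟩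
    rintro u (rfl | rfl) v (rfl | rfl) huv
    exacts [(huv.ne rfl).elim, h_base, h_base.symm, (huv.ne rfl).elim]
  subset := by
    rintro v x (⟨-, rfl⟩ | ⟨-, rfl⟩)
    exacts [.inl (.inl rfl), .inl (.inr rfl)]
  fst_mem := .inl ⟨rfl, rfl⟩
  snd_mem := .inr ⟨rfl, rfl⟩

theorem IsQModel.eq_of_mem_of_mem {x : QVert k} {u v : V} (hσ : σ.length < k)
    (h₁ : IsQModel G k (false :: σ) S a c f₁) (h₂ : IsQModel G k (true :: σ) T b c f₂)
    (hu : x ∈ f₁ u) (hv : x ∈ f₂ v) : u = v := by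
  have hp₁ := h₁.snd_mem
  have hp₂ := h₂.snd_mem
  rw [qbase_false_cons hσ] at hp₁
  rw [qbase_true_cons hσ] at hp₂
  obtain rfl := qregion_false_inter_qregion_true hσ ⟨h₁.subset u hu, h₂.subset v hv⟩
  exact (h₁.eq_of_mem hu hp₁).trans (h₂.eq_of_mem hp₂ hv)

theorem IsQModel.union (hσ : σ.length < k) (h₁ : IsQModel G k (false :: σ) S a c f₁)
    (h₂ : IsQModel G k (true :: σ) T b c f₂) (hST : S ∩ T = {c})
    (hsep : ∀ u ∈ S, ∀ v ∈ T, G.Adj u v → u = c ∨ v = c ∨ (u = a ∧ v = b)) :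
    IsQModel G k σ (S ∪ T) a b fun v => f₁ v ∪ f₂ v := by
  obtain ⟨hcS, hcT⟩ : c ∈ S ∩ T := hST ▸ rfl
  obtain ⟨ha, hp₁⟩ := And.intro h₁.fst_mem h₁.snd_mem
  obtain ⟨hb, hp₂⟩ := And.intro h₂.fst_mem h₂.snd_mem
  rw [qbase_false_cons hσ] at ha hp₁
  rw [qbase_true_cons hσ] at hb hp₂
  have h_adj_cross : ∀ u ∈ S, ∀ v ∈ T, G.Adj u v →
      SetAdj (Qgraph k) (f₁ u ∪ f₂ u) (f₁ v ∪ f₂ v) := by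
    intro u hu v hv huv
    rcases hsep u hu v hv huv with rfl | rfl | ⟨rfl, rfl⟩
    · exact (h₂.setAdj _ hcT _ hv huv).mono Set.subset_union_right Set.subset_union_right
    · exact (h₁.setAdj _ hu _ hcS huv).mono Set.subset_union_left Set.subset_union_left
    · exact ⟨_, .inl ha, _, .inr hb, Qgraph_adj_qbase hσ.le⟩
  refine ⟨?_, ?_, ?_, ?_, ?_, .inl ha, .inr hb⟩
  · intro v hv
    by_cases hvS : v ∈ S
    · by_cases hvT : v ∈ T
      · obtain rfl : v = c := hST.subset ⟨hvS, hvT⟩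
        exact SimpleGraph.induce_union_connected (h₁.connected v hvS).preconnected
          (h₂.connected v hvT).preconnected ⟨_, hp₁, hp₂⟩
      · rw [h₂.eq_empty v hvT, Set.union_empty]
        exact h₁.connected v hvS
    · rw [h₁.eq_empty v hvS, Set.empty_union]
      exact h₂.connected v (hv.resolve_left hvS)
  · intro v hv
    rw [h₁.eq_empty v fun h => hv (.inl h), h₂.eq_empty v fun h => hv (.inr h), Set.union_empty]
  · rintro x u v (hu | hu) (hv | hv)
    exacts [h₁.eq_of_mem hu hv, h₁.eq_of_mem_of_mem hσ h₂ hu hv,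
      (h₁.eq_of_mem_of_mem hσ h₂ hv hu).symm, h₂.eq_of_mem hu hv]
  · rintro u (hu | hu) v (hv | hv) huv
    · exact (h₁.setAdj u hu v hv huv).mono Set.subset_union_left Set.subset_union_left
    · exact h_adj_cross u hu v hv huv
    · exact (h_adj_cross v hv u hu huv.symm).symm
    · exact (h₂.setAdj u hu v hv huv).mono Set.subset_union_right Set.subset_union_right
  · exact fun v => Set.union_subset ((h₁.subset v).trans (qregion_cons_subset hσ false))
      ((h₂.subset v).trans (qregion_cons_subset hσ true))

theorem TriangleDecomp.exists_isQModel (h : TriangleDecomp G S a b)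
    (hσ : S.ncard + σ.length ≤ k + 2) : ∃ f, IsQModel G k σ S a b f := by
  induction h generalizing σ with
  | edge hab =>
    rw [Set.ncard_pair hab] at hσ
    exact ⟨_, isQModel_pair (by lia) hab⟩
  | triangle hS hT hST hsep ihS ihT =>
    have h_card := Set.ncard_union_add_ncard_inter _ _ hS.finite hT.finite
    rw [hST, Set.ncard_singleton] at h_card
    have hS_card := hS.two_le_ncard
    have hT_card := hT.two_le_ncard
    obtain ⟨f₁, h₁⟩ := ihS (σ := false :: σ) (by rw [List.length_cons]; lia)
    obtain ⟨f₂, h₂⟩ := ihT (σ := true :: σ) (by rw [List.length_cons]; lia)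
    exact ⟨_, h₁.union (by lia) h₂ hST hsep⟩

theorem IsQModel.isMinorModel (h : IsQModel G k σ Set.univ a b f) :
    IsMinorModel G (Qgraph k) f :=
  ⟨fun v => Set.nonempty_coe_sort.1 (h.connected v trivial).nonempty,
    fun v => h.connected v trivial,
    fun _ _ huv => Set.disjoint_left.2 fun _ hu hv => huv (h.eq_of_mem hu hv),
    fun u v => h.setAdj u trivial v trivial⟩

end QModel

/-- The edges on the unbounded face of a 2-connected outerplanar graph are the edges whose ends do
not separate it, which is how `hconn` expresses that `a₁a₂` is an outer edge. -/
theorem near_triangulation_minor_of_Qk_general {V : Type*} [Fintype V] {H : SimpleGraph V} {k : ℕ}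
    (h2 : IsKConnected 2 H) (hOP : Outerplanar H) (hcard : Fintype.card V ≤ k + 2) {a₁ a₂ : V}
    (ha : H.Adj a₁ a₂) (hconn : (H.induce {a₁, a₂}ᶜ).Connected) :
    ∃ f : V → Set (QVert k), IsMinorModel H (Qgraph k) f ∧
      (Sum.inl false : QVert k) ∈ f a₁ ∧ (Sum.inl true : QVert k) ∈ f a₂ := by
  have h_decomp : TriangleDecomp H Set.univ a₁ a₂ :=
    .of_connected_compl hOP (h2.twoLinked ha.ne) ha hconn
  have h_card : (Set.univ : Set V).ncard + ([] : List Bool).length ≤ k + 2 := by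
    rwa [Set.ncard_univ, Nat.card_eq_fintype_card]
  obtain ⟨f, hf⟩ := h_decomp.exists_isQModel h_card
  exact ⟨f, hf.isMinorModel, hf.fst_mem, hf.snd_mem⟩

/-- Lemma 2.3. A 2-connected outerplanar near-triangulation `H` with `k`
triangles (formalized combinatorially: `H` is 2-connected, edge-maximal outerplanar, and has
`k + 2` vertices, an edge being incident with the unbounded face iff its ends have exactly
one common neighbour) is isomorphic to a minor of `𝒬_k`; moreover for every edge `a₁a₂`
incident with the unbounded face, the minor model can be chosen so that the ends `w₁, w₂`
of the base edge of `𝒬_k` belong to the nodes of `a₁` and `a₂` respectively. -/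
theorem near_triangulation_minor_of_Qk {V : Type} [Fintype V] (H : SimpleGraph V) (k : ℕ)
    (h2 : IsKConnected 2 H) (hOP : Outerplanar H)
    (hMax : ∀ u v : V, u ≠ v → ¬ H.Adj u v →
      ¬ Outerplanar (H ⊔ SimpleGraph.fromEdgeSet {s(u, v)}))
    (hcard : k + 2 = Fintype.card V) (hk : 0 < k)
    (a₁ a₂ : V) (ha : H.Adj a₁ a₂) (hout : ∃! c : V, H.Adj a₁ c ∧ H.Adj a₂ c) :
    ∃ f : V → Set (QVert k), IsMinorModel H (Qgraph k) f ∧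
      (Sum.inl false : QVert k) ∈ f a₁ ∧ (Sum.inl true : QVert k) ∈ f a₂ := by
  exact near_triangulation_minor_of_Qk_general h2 hOP hcard.ge ha <|
    IsOuterplanarSaturated.connected_compl hMax hOP.2 (h2.twoLinked ha.ne) ha.ne hout
end

section
/- Let H be a graph that has no minor isomorphic to K_4 or K_{2,3}. Then there exists a positive integer k such that H is isomorphic to a minor of 𝒬_k. -/
/-!
Common definitions: minors, widths, connectivity, the specific graphs
`K4`, `K23`, `C32`, `graphA`, the binary trees `CT_h`, the graphs `𝒫_k`, `𝒬_k`,
the trees `T_h`, homeomorphic embeddings, cascades, and related notions,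
following Dang--Thomas, "Minors of two-connected graphs of large path-width".
-/

open SimpleGraph

/-!
Models of `G[S₁]` at `(u, x)` and of `G[S₂]` at `(v, x)`, with the roots on the two ends of the
base edge of `𝒬_k`, glue along `x` to a model of `G[S₁ ∪ S₂]` at `(u, v)` in `𝒬_{k+1}`. By
induction on `S`, the graph `G[S]` has a model rooted at `(u, u)` for every `u`, and at `(u, v)`
whenever some connected set outside `S` touches both `u` and `v`.

If `v` is the only possible neighbour of `u` in the component `C` of `v` in `S \ {u}`, then `S`
splits into `S \ C` and `C`. Otherwise choose a neighbour `x ≠ v` of `u` in `C` for which the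
component `D` of `v` in `S \ {u, x}` is minimal, and split `S` into `S \ D` and `D ∪ {x}`. Were
there a neighbour `y ≠ v` of `u` in `D`, minimality would yield connections from `v` to `x` and
to `y` that avoid `y` and `x` respectively, and together with the outer link between `u` and `v`
they form a `K_{2,3}` minor. For the roots `(u, u)` the neighbour `v` of `u` is chosen along with
`x`, and the same configuration contains `K_4` or `K_{2,3}`.
-/

section ConnectedSets

variable {V : Type*} {G : SimpleGraph V} {A B R T X : Set V} {a b x y : V}

/-- Two vertex sets joined by an edge, the adjacency relation required of branch sets. -/
def Touches (G : SimpleGraph V) (A B : Set V) : Prop :=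
  ∃ a ∈ A, ∃ b ∈ B, G.Adj a b

theorem Touches.symm (h : Touches G A B) : Touches G B A := by
  obtain ⟨a, ha, b, hb, hab⟩ := h
  exact ⟨b, hb, a, ha, hab.symm⟩

theorem Touches.mono {A' B' : Set V} (h : Touches G A B) (hA : A ⊆ A') (hB : B ⊆ B') :
    Touches G A' B' := by
  obtain ⟨a, ha, b, hb, hab⟩ := h
  exact ⟨a, hA ha, b, hB hb, hab⟩

theorem touches_of_adj (h : G.Adj a b) (ha : a ∈ A) (hb : b ∈ B) : Touches G A B :=
  ⟨a, ha, b, hb, h⟩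

theorem connected_induce_singleton_s7 (G : SimpleGraph V) (a : V) : (G.induce {a}).Connected := by
  rw [induce_singleton_eq_top]
  exact connected_top

theorem Touches.connected_induce_union (h : Touches G A B) (hA : (G.induce A).Connected)
    (hB : (G.induce B).Connected) : (G.induce (A ∪ B)).Connected := by
  obtain ⟨a, ha, b, hb, hab⟩ := h
  exact SimpleGraph.connected_induce_union hA.preconnected hB.preconnected ha hb hab

theorem connected_induce_image {W : Type*} {G' : SimpleGraph W} (hA : (G.induce A).Connected)
    (φ : G →g G') : (G'.induce (φ '' A)).Connected := by
  let φA : G.induce A →g G'.induce (φ '' A) :=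
    ⟨fun a => ⟨φ a.1, a.1, a.2, rfl⟩, fun h => φ.map_adj h⟩
  refine hA.map φA ?_
  rintro ⟨_, a, ha, rfl⟩
  exact ⟨⟨a, ha⟩, rfl⟩

theorem touches_sdiff_of_connected (hA : (G.induce A).Connected) (hBA : B ⊆ A)
    (hB : B.Nonempty) (hne : (A \ B).Nonempty) : Touches G B (A \ B) := by
  obtain ⟨b, hb⟩ := hB
  obtain ⟨a, haA, haB⟩ := hne
  obtain ⟨p⟩ := hA.preconnected ⟨b, hBA hb⟩ ⟨a, haA⟩
  obtain ⟨d, -, hd₁, hd₂⟩ := p.exists_boundary_dart (Subtype.val ⁻¹' B) hb haB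
  exact ⟨d.fst, hd₁, d.snd, ⟨d.snd.2, hd₂⟩, d.adj⟩

/-- The vertex set of the component of `G[R]` containing `a`. It is empty when `a ∉ R`. -/
def componentIn (G : SimpleGraph V) (R : Set V) (a : V) : Set V :=
  ⋃₀ {T | T ⊆ R ∧ a ∈ T ∧ (G.induce T).Connected}

theorem subset_componentIn (hT : (G.induce T).Connected) (hTR : T ⊆ R) (ha : a ∈ T) :
    T ⊆ componentIn G R a :=
  Set.subset_sUnion_of_mem ⟨hTR, ha, hT⟩

theorem componentIn_subset (G : SimpleGraph V) (R : Set V) (a : V) : componentIn G R a ⊆ R :=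
  Set.sUnion_subset fun _ hT => hT.1

theorem mem_componentIn_self (ha : a ∈ R) : a ∈ componentIn G R a :=
  subset_componentIn (connected_induce_singleton_s7 G a) (Set.singleton_subset_iff.2 ha) rfl rfl

theorem mem_componentIn_symm (h : b ∈ componentIn G R a) : a ∈ componentIn G R b := by
  obtain ⟨T, ⟨hTR, ha, hT⟩, hb⟩ := h
  exact subset_componentIn hT hTR hb ha

theorem mem_of_mem_componentIn (h : b ∈ componentIn G R a) : a ∈ R :=
  componentIn_subset G R b (mem_componentIn_symm h)

theorem connected_induce_componentIn (ha : a ∈ R) : (G.induce (componentIn G R a)).Connected :=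
  induce_sUnion_connected_of_pairwise_not_disjoint
    ⟨{a}, Set.singleton_subset_iff.2 ha, rfl, connected_induce_singleton_s7 G a⟩
    (fun hS hT => ⟨a, hS.2.1, hT.2.1⟩) fun hT => hT.2.2

theorem mem_componentIn_of_adj (hx : x ∈ componentIn G R a) (hxy : G.Adj x y) (hy : y ∈ R) :
    y ∈ componentIn G R a := by
  have ha : a ∈ R := mem_of_mem_componentIn hx
  refine subset_componentIn
    ((touches_of_adj hxy hx (Set.mem_singleton y)).connected_induce_union
      (connected_induce_componentIn ha) (connected_induce_singleton_s7 G y)) ?_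
    (Or.inl (mem_componentIn_self ha)) (Or.inr rfl)
  exact Set.union_subset (componentIn_subset G R a) (Set.singleton_subset_iff.2 hy)

theorem componentIn_subset_componentIn (hb : b ∈ componentIn G R a)
    (h : componentIn G T b ⊆ R) : componentIn G T b ⊆ componentIn G R a := by
  rintro c ⟨S, ⟨hST, hbS, hS⟩, hc⟩
  have hSR : S ⊆ R := (subset_componentIn hS hST hbS).trans h
  have ha : a ∈ R := mem_of_mem_componentIn hb
  exact subset_componentIn (induce_union_connected
    (connected_induce_componentIn ha).preconnected hS.preconnected ⟨b, hb, hbS⟩)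
    (Set.union_subset (componentIn_subset G R a) hSR) (Or.inl (mem_componentIn_self ha))
    (Or.inr hc)

theorem componentIn_mono (h : T ⊆ R) : componentIn G T a ⊆ componentIn G R a :=
  Set.sUnion_subset fun _ hS => subset_componentIn hS.2.2 (hS.1.trans h) hS.2.1

theorem componentIn_sdiff_touches (hT : (G.induce T).Connected) (ha : a ∈ T \ X)
    (hX : (T ∩ X).Nonempty) : Touches G (componentIn G (T \ X) a) X := by
  have hCT : componentIn G (T \ X) a ⊆ T \ X := componentIn_subset G _ a
  obtain ⟨x, hxT, hxX⟩ := hX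
  obtain ⟨d, hd, z, ⟨hzT, hzC⟩, hdz⟩ := touches_sdiff_of_connected hT
    (hCT.trans Set.sdiff_subset) ⟨a, mem_componentIn_self ha⟩ ⟨x, hxT, fun h => (hCT h).2 hxX⟩
  refine ⟨d, hd, z, ?_, hdz⟩
  by_contra hzX
  exact hzC (mem_componentIn_of_adj hd hdz ⟨hzT, hzX⟩)

theorem componentIn_sdiff_singleton_touches (hb : b ∈ componentIn G R a) (hab : a ≠ b) :
    Touches G (componentIn G (R \ {b}) a) {b} := by
  have ha : a ∈ R := mem_of_mem_componentIn hb
  exact (componentIn_sdiff_touches (connected_induce_componentIn ha)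
    ⟨mem_componentIn_self ha, hab⟩ ⟨b, hb, Set.mem_singleton b⟩).mono
    (componentIn_mono (Set.sdiff_subset_sdiff_left (componentIn_subset G R a))) subset_rfl

theorem componentIn_ssubset_of_notMem (hx : b ∈ componentIn G (R \ {x}) a)
    (hy : y ∈ componentIn G (R \ {x}) a) (hxy : x ∉ componentIn G (R \ {y}) b) :
    componentIn G (R \ {y}) b ⊂ componentIn G (R \ {x}) a := by
  have hR : componentIn G (R \ {y}) b ⊆ R \ {x} :=
    Set.subset_sdiff_singleton ((componentIn_subset G _ b).trans Set.sdiff_subset) hxy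
  exact ⟨componentIn_subset_componentIn hx hR, fun h => (componentIn_subset G _ b (h hy)).2 rfl⟩

end ConnectedSets

section Obstructions

variable {V : Type*} {G : SimpleGraph V} {M P R W X : Set V} {u v x y : V}

theorem touches_singleton : Touches G {x} {y} ↔ G.Adj x y := by
  simp [Touches]

theorem isMinor_K4_of_touches {A : Fin 4 → Set V} (hA : ∀ i, (G.induce (A i)).Connected)
    (hd : ∀ i j, i < j → Disjoint (A i) (A j)) (ht : ∀ i j, i < j → Touches G (A i) (A j)) :
    IsMinor K4 G := by
  refine ⟨A, fun i => Set.nonempty_coe_sort.1 (hA i).nonempty, hA, fun i j h => ?_,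
    fun i j h => ?_⟩
  · exact h.lt_or_gt.elim (hd i j) fun h => (hd j i h).symm
  · exact h.ne.lt_or_gt.elim (ht i j) fun h => (ht j i h).symm

theorem isMinor_K23_of_touches {A : Fin 2 → Set V} {B : Fin 3 → Set V}
    (hA : ∀ i, (G.induce (A i)).Connected) (hB : ∀ j, (G.induce (B j)).Connected)
    (hdA : Disjoint (A 0) (A 1)) (hdB : ∀ i j, i < j → Disjoint (B i) (B j))
    (hd : ∀ i j, Disjoint (A i) (B j)) (ht : ∀ i j, Touches G (A i) (B j)) :
    IsMinor K23 G := by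
  refine ⟨Sum.elim A B, ?_, Sum.rec hA hB, ?_, ?_⟩
  · exact Sum.rec (fun i => Set.nonempty_coe_sort.1 (hA i).nonempty)
      fun j => Set.nonempty_coe_sort.1 (hB j).nonempty
  · rintro (i | i) (j | j) h
    · fin_cases i <;> fin_cases j
      exacts [absurd rfl h, hdA, hdA.symm, absurd rfl h]
    · exact hd i j
    · exact (hd j i).symm
    · exact (ne_of_apply_ne _ h).lt_or_gt.elim (hdB i j) fun h => (hdB j i h).symm
  · rintro (i | i) (j | j) h
    · simp [K23] at h
    · exact ht i j
    · exact (ht j i).symm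
    · simp [K23] at h

theorem exists_connected_touches_of_mem_componentIn (hx : x ∈ componentIn G (R \ {y}) v)
    (hy : y ∈ componentIn G (R \ {x}) v) :
    ∃ M ⊆ R, x ∉ M ∧ y ∉ M ∧ v ∈ M ∧ (G.induce M).Connected ∧ Touches G M {x} ∧
      Touches G M {y} := by
  obtain ⟨hvR, hvy : v ≠ y⟩ := mem_of_mem_componentIn hx
  have hvx : v ≠ x := (mem_of_mem_componentIn hy).2
  have hMR := componentIn_subset G ((R \ {x}) \ {y}) v
  have hv : v ∈ (R \ {x}) \ {y} := ⟨⟨hvR, hvx⟩, hvy⟩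
  refine ⟨componentIn G ((R \ {x}) \ {y}) v, fun z hz => (hMR hz).1.1, fun h => (hMR h).1.2 rfl,
    fun h => (hMR h).2 rfl, mem_componentIn_self hv, connected_induce_componentIn hv, ?_,
    componentIn_sdiff_singleton_touches hy hvy⟩
  rw [sdiff_sdiff_comm]
  exact componentIn_sdiff_singleton_touches hx hvx

theorem isMinor_K23_of_fork (hu : u ∉ R) (hux : G.Adj u x) (huy : G.Adj u y)
    (hx : x ∈ componentIn G (R \ {y}) v) (hy : y ∈ componentIn G (R \ {x}) v)
    (hW : (G.induce W).Connected) (hRW : Disjoint R W) (huW : u ∉ W)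
    (huW' : Touches G {u} W) (hvW : Touches G {v} W) : IsMinor K23 G := by
  obtain ⟨M, hMR, hxM, hyM, hvM, hM, hMx, hMy⟩ :=
    exists_connected_touches_of_mem_componentIn hx hy
  obtain ⟨hxR, hxy : x ≠ y⟩ := componentIn_subset G _ v hx
  have hyR : y ∈ R := (componentIn_subset G _ v hy).1
  have huM : u ∉ M := fun h => hu (hMR h)
  have hMW : Disjoint M W := hRW.mono_left hMR
  have hMW' : Touches G M W := hvW.mono (Set.singleton_subset_iff.2 hvM) subset_rfl
  have hxW : x ∉ W := Set.disjoint_left.1 hRW hxR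
  have hyW : y ∉ W := Set.disjoint_left.1 hRW hyR
  refine isMinor_K23_of_touches (A := ![{u}, M]) (B := ![{x}, {y}, W]) ?_ ?_ ?_ ?_ ?_ ?_ <;>
    simp [Fin.forall_fin_succ, touches_singleton, hux.ne', huy.ne',
      hxy.symm, *]

theorem isMinor_K4_of_connected_disjoint (hux : G.Adj u x) (huy : G.Adj u y) (huv : G.Adj u v)
    (hX : (G.induce X).Connected) (hM : (G.induce M).Connected) (hXM : Disjoint X M)
    (huX : u ∉ X) (huM : u ∉ M) (hyX : y ∉ X) (hyM : y ∉ M) (hxX : x ∈ X) (hvM : v ∈ M)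
    (hXy : Touches G X {y}) (hMx : Touches G M {x}) (hMy : Touches G M {y}) : IsMinor K4 G := by
  have huX' : Touches G {u} X := touches_of_adj hux rfl hxX
  have huM' : Touches G {u} M := touches_of_adj huv rfl hvM
  have hXM' : Touches G X M := (hMx.mono subset_rfl (Set.singleton_subset_iff.2 hxX)).symm
  refine isMinor_K4_of_touches (A := ![{u}, M, X, {y}]) ?_ ?_ ?_ <;>
    simp [Fin.forall_fin_succ, touches_singleton, huy.ne', hXM.symm,
      hXM'.symm, *]

theorem isMinor_K23_of_not_disjoint (hux : G.Adj u x) (huy : G.Adj u y) (huv : G.Adj u v)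
    (hxy : x ≠ y) (hP : (G.induce P).Connected) (hM : (G.induce M).Connected)
    (hPM : ¬ Disjoint P M) (huP : u ∉ P) (hxP : x ∉ P) (hyP : y ∉ P) (hvP : v ∉ P) (huM : u ∉ M)
    (hxM : x ∉ M) (hyM : y ∉ M) (hvM : v ∈ M) (hPx : Touches G P {x}) (hPy : Touches G P {y}) :
    IsMinor K23 G := by
  have hPM' : (M ∩ P).Nonempty := by rwa [Set.inter_comm, ← Set.not_disjoint_iff_nonempty_inter]
  let D : Set V := componentIn G (M \ P) v
  have hDM : D ⊆ M \ P := componentIn_subset G _ v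
  have hD : (G.induce D).Connected := connected_induce_componentIn ⟨hvM, hvP⟩
  have hDP : Touches G D P := componentIn_sdiff_touches hM ⟨hvM, hvP⟩ hPM'
  have hPD : Disjoint P D := Set.disjoint_right.2 fun z hz => (hDM hz).2
  have huD : u ∉ D := fun h => huM (hDM h).1
  have hxD : x ∉ D := fun h => hxM (hDM h).1
  have hyD : y ∉ D := fun h => hyM (hDM h).1
  have huD' : Touches G {u} D := touches_of_adj huv rfl (mem_componentIn_self ⟨hvM, hvP⟩)
  refine isMinor_K23_of_touches (A := ![{u}, P]) (B := ![{x}, {y}, D]) ?_ ?_ ?_ ?_ ?_ ?_ <;>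
    simp [Fin.forall_fin_succ, touches_singleton, hux.ne', huy.ne',
      hxy.symm, hDP.symm, *]

theorem isMinor_K4_or_K23_of_connected (hux : G.Adj u x) (huy : G.Adj u y) (huv : G.Adj u v)
    (hxy : x ≠ y) (hP : (G.induce P).Connected) (hM : (G.induce M).Connected)
    (huP : u ∉ P) (hxP : x ∉ P) (hyP : y ∉ P) (hvP : v ∉ P) (huM : u ∉ M)
    (hxM : x ∉ M) (hyM : y ∉ M) (hvM : v ∈ M) (hPx : Touches G P {x}) (hPy : Touches G P {y})
    (hMx : Touches G M {x}) (hMy : Touches G M {y}) : IsMinor K4 G ∨ IsMinor K23 G := by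
  by_cases hPM : Disjoint P M
  · refine Or.inl (isMinor_K4_of_connected_disjoint hux huy huv
      (hPx.connected_induce_union hP (connected_induce_singleton_s7 G x)) hM ?_ ?_ huM ?_ hyM
      (Or.inr rfl) hvM (hPy.mono Set.subset_union_left subset_rfl) hMx hMy)
    · simp [hPM, hxM]
    · simp [huP, hux.ne]
    · simp [hyP, hxy.symm]
  · exact Or.inr (isMinor_K23_of_not_disjoint hux huy huv hxy hP hM hPM huP hxP hyP hvP huM hxM
      hyM hvM hPx hPy)

theorem not_outerplanar_of_triangle (hu : u ∉ R) (hux : G.Adj u x) (huy : G.Adj u y)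
    (huv : G.Adj u v) (hx : x ∈ componentIn G (R \ {y}) v) (hy : y ∈ componentIn G (R \ {x}) v)
    (hv : x ∈ componentIn G (R \ {v}) y) : ¬ Outerplanar G := by
  suffices IsMinor K4 G ∨ IsMinor K23 G from fun h => this.elim h.1 h.2
  obtain ⟨M, hMR, hxM, hyM, hvM, hM, hMx, hMy⟩ :=
    exists_connected_touches_of_mem_componentIn hx hy
  have hxy : x ≠ y := (componentIn_subset G _ v hx).2
  have huM : u ∉ M := fun h => hu (hMR h)
  obtain ⟨p, hp, hpy⟩ : ∃ p ∈ componentIn G ((R \ {v}) \ {y}) x, G.Adj p y := by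
    simpa [Touches] using componentIn_sdiff_singleton_touches (mem_componentIn_symm hv) hxy
  obtain rfl | hpx := eq_or_ne p x
  · exact Or.inl (isMinor_K4_of_connected_disjoint hux huy huv (connected_induce_singleton_s7 G p) hM
      (by simpa) (by simpa using hux.ne) huM (by simpa using hxy.symm) hyM rfl hvM
      (touches_singleton.2 hpy) hMx hMy)
  have hp' : p ∈ ((R \ {v}) \ {y}) \ {x} := ⟨componentIn_subset G _ x hp, hpx⟩
  have hPR := componentIn_subset G (((R \ {v}) \ {y}) \ {x}) p
  exact isMinor_K4_or_K23_of_connected hux huy huv hxy (connected_induce_componentIn hp') hM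
    (fun h => hu (hPR h).1.1.1) (fun h => (hPR h).2 rfl) (fun h => (hPR h).1.2 rfl)
    (fun h => (hPR h).1.1.2 rfl) huM hxM hyM hvM
    (componentIn_sdiff_singleton_touches (mem_componentIn_symm hp) hpx)
    (touches_of_adj hpy (mem_componentIn_self hp') rfl) hMx hMy

end Obstructions

section RootedModels

variable {V W : Type*} {G : SimpleGraph V} {Q : SimpleGraph W} {S S₁ S₂ : Set V}
  {f g : V → Set W} {u v x : V} {p q r : W}

/-- A minor model of `G[S]` in `Q` whose branch sets at the roots `u` and `v` contain the
prescribed vertices `p` and `q`. Branch sets are indexed by all of `V` and are empty off `S`. -/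
structure IsRootedModel (G : SimpleGraph V) (Q : SimpleGraph W) (S : Set V) (u v : V) (p q : W)
    (f : V → Set W) : Prop where
  connected : ∀ a ∈ S, (Q.induce (f a)).Connected
  eq_empty : ∀ a ∉ S, f a = ∅
  disjoint : ∀ a b, a ≠ b → Disjoint (f a) (f b)
  touches : ∀ a ∈ S, ∀ b ∈ S, G.Adj a b → Touches Q (f a) (f b)
  left_mem : p ∈ f u
  right_mem : q ∈ f v

namespace IsRootedModel

theorem mem_of_mem (h : IsRootedModel G Q S u v p q f) {a : V} {z : W} (hz : z ∈ f a) :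
    a ∈ S := by
  by_contra ha
  exact Set.notMem_empty z (h.eq_empty a ha ▸ hz)

theorem eq_of_mem (h : IsRootedModel G Q S u v p q f) {a b : V} {z : W} (ha : z ∈ f a)
    (hb : z ∈ f b) : a = b :=
  by_contra fun hab => Set.disjoint_left.1 (h.disjoint a b hab) ha hb

theorem map (h : IsRootedModel G Q S u v p q f) {W' : Type*} {Q' : SimpleGraph W'}
    (φ : Q →g Q') (hφ : Function.Injective φ) :
    IsRootedModel G Q' S u v (φ p) (φ q) fun a => φ '' f a where
  connected a ha := connected_induce_image (h.connected a ha) φ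
  eq_empty a ha := by rw [h.eq_empty a ha, Set.image_empty]
  disjoint a b hab := Set.disjoint_image_of_injective hφ (h.disjoint a b hab)
  touches a ha b hb hab := by
    obtain ⟨y, hy, z, hz, hyz⟩ := h.touches a ha b hb hab
    exact ⟨φ y, ⟨y, hy, rfl⟩, φ z, ⟨z, hz, rfl⟩, φ.map_adj hyz⟩
  left_mem := ⟨p, h.left_mem, rfl⟩
  right_mem := ⟨q, h.right_mem, rfl⟩

theorem pair (G : SimpleGraph V) (u v : V) (hpq : Q.Adj p q) :
    IsRootedModel G Q {u, v} u v p q fun a => {z | a = u ∧ z = p ∨ a = v ∧ z = q} where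
  connected a ha := by
    by_cases huv : u = v
    · have heq : {z | a = u ∧ z = p ∨ a = v ∧ z = q} = {p} ∪ {q} := by
        obtain rfl : a = u := by simpa [← huv] using ha
        ext z
        simp [← huv, or_comm]
      rw [heq]
      exact (touches_of_adj hpq (Set.mem_singleton p) (Set.mem_singleton q)).connected_induce_union
        (connected_induce_singleton_s7 Q p) (connected_induce_singleton_s7 Q q)
    · obtain ⟨z, hz⟩ : ∃ z, {z | a = u ∧ z = p ∨ a = v ∧ z = q} = {z} := by
        obtain rfl | rfl := ha
        exacts [⟨p, by simp [huv]⟩, ⟨q, by simp [Ne.symm huv]⟩]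
      rw [hz]
      exact connected_induce_singleton_s7 Q z
  eq_empty a ha := by
    simp only [Set.mem_insert_iff, Set.mem_singleton_iff, not_or] at ha
    simp [ha]
  disjoint a b hab := by
    rw [Set.disjoint_left]
    rintro z (⟨rfl, rfl⟩ | ⟨rfl, rfl⟩) (⟨rfl, h⟩ | ⟨rfl, h⟩)
    exacts [hab rfl, hpq.ne h, hpq.ne' h, hab rfl]
  touches a ha b hb hab := by
    rcases ha with rfl | rfl <;> rcases hb with rfl | rfl
    · exact absurd rfl hab.ne
    · exact touches_of_adj hpq (by simp) (by simp)
    · exact touches_of_adj hpq.symm (by simp) (by simp)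
    · exact absurd rfl hab.ne
  left_mem := by simp
  right_mem := by simp

theorem disjoint_union (hf : IsRootedModel G Q S₁ u x p r f)
    (hg : IsRootedModel G Q S₂ v x q r g) (hr : ∀ a b, f a ∩ g b ⊆ {r}) {a b : V} (hab : a ≠ b) :
    Disjoint (f a ∪ g a) (f b ∪ g b) := by
  have hfg : ∀ {c d}, c ≠ d → Disjoint (f c) (g d) := fun {c d} hcd =>
    Set.disjoint_left.2 fun z hc hd => by
      obtain rfl : z = r := hr c d ⟨hc, hd⟩
      exact hcd ((hf.eq_of_mem hc hf.right_mem).trans (hg.eq_of_mem hg.right_mem hd))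
  rw [Set.disjoint_union_left, Set.disjoint_union_right, Set.disjoint_union_right]
  exact ⟨⟨hf.disjoint a b hab, hfg hab⟩, (hfg hab.symm).symm, hg.disjoint a b hab⟩

theorem connected_union (hf : IsRootedModel G Q S₁ u x p r f)
    (hg : IsRootedModel G Q S₂ v x q r g) (hpq : Q.Adj p q) {a : V}
    (hI : a ∈ S₁ ∩ S₂ → a = x ∨ a = u ∧ a = v) (ha : a ∈ S₁ ∪ S₂) :
    (Q.induce (f a ∪ g a)).Connected := by
  by_cases h₁ : a ∈ S₁ <;> by_cases h₂ : a ∈ S₂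
  · have hfa := hf.connected a h₁
    have hga := hg.connected a h₂
    obtain rfl | ⟨rfl, rfl⟩ := hI ⟨h₁, h₂⟩
    · exact induce_union_connected hfa.preconnected hga.preconnected
        ⟨r, hf.right_mem, hg.right_mem⟩
    · exact (touches_of_adj hpq hf.left_mem hg.left_mem).connected_induce_union hfa hga
  · rw [hg.eq_empty a h₂, Set.union_empty]
    exact hf.connected a h₁
  · rw [hf.eq_empty a h₁, Set.empty_union]
    exact hg.connected a h₂
  · exact absurd ha (not_or.2 ⟨h₁, h₂⟩)

theorem touches_union (hf : IsRootedModel G Q S₁ u x p r f)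
    (hg : IsRootedModel G Q S₂ v x q r g) (hpq : Q.Adj p q)
    (hE : ∀ a ∈ S₁, ∀ b ∈ S₂, G.Adj a b → a ∈ S₂ ∨ b ∈ S₁ ∨ a = u ∧ b = v) {a b : V}
    (ha : a ∈ S₁ ∪ S₂) (hb : b ∈ S₁ ∪ S₂) (hab : G.Adj a b) :
    Touches Q (f a ∪ g a) (f b ∪ g b) := by
  have cross : ∀ {c d}, c ∈ S₁ → d ∈ S₂ → G.Adj c d → Touches Q (f c ∪ g c) (f d ∪ g d) := by
    intro c d hc hd hcd
    rcases hE c hc d hd hcd with h | h | ⟨rfl, rfl⟩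
    · exact (hg.touches c h d hd hcd).mono Set.subset_union_right Set.subset_union_right
    · exact (hf.touches c hc d h hcd).mono Set.subset_union_left Set.subset_union_left
    · exact touches_of_adj hpq (Or.inl hf.left_mem) (Or.inr hg.left_mem)
  rcases ha with ha | ha <;> rcases hb with hb | hb
  · exact (hf.touches a ha b hb hab).mono Set.subset_union_left Set.subset_union_left
  · exact cross ha hb hab
  · exact (cross hb ha hab.symm).symm
  · exact (hg.touches a ha b hb hab).mono Set.subset_union_right Set.subset_union_right

theorem union (hf : IsRootedModel G Q S₁ u x p r f) (hg : IsRootedModel G Q S₂ v x q r g)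
    (hpq : Q.Adj p q) (hr : ∀ a b, f a ∩ g b ⊆ {r})
    (hI : ∀ a ∈ S₁ ∩ S₂, a = x ∨ a = u ∧ a = v)
    (hE : ∀ a ∈ S₁, ∀ b ∈ S₂, G.Adj a b → a ∈ S₂ ∨ b ∈ S₁ ∨ a = u ∧ b = v) :
    IsRootedModel G Q (S₁ ∪ S₂) u v p q fun a => f a ∪ g a where
  connected a := hf.connected_union hg hpq (hI a)
  eq_empty a ha := by
    rw [hf.eq_empty a fun h => ha (Or.inl h), hg.eq_empty a fun h => ha (Or.inr h),
      Set.union_empty]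
  disjoint a b := hf.disjoint_union hg hr
  touches a ha b := hf.touches_union hg hpq hE ha
  left_mem := Or.inl hf.left_mem
  right_mem := Or.inr hg.left_mem

theorem isMinor (h : IsRootedModel G Q Set.univ u v p q f) : IsMinor G Q :=
  ⟨f, fun a => Set.nonempty_coe_sort.1 (h.connected a trivial).nonempty,
    fun a => h.connected a trivial, h.disjoint, fun a b => h.touches a trivial b trivial⟩

end IsRootedModel

end RootedModels

section BinaryGluing

/-- The embedding of the copy of `𝒬_k` at the child `b` of the root into `𝒬_{k+1}`: its base
edge joins the end `b` of the base edge of `𝒬_{k+1}` to the root apex. Nodes are reversed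
lists of moves, so descending into a child appends `b` at the end. -/
def qChild (k : ℕ) (b : Bool) : QVert k → QVert (k + 1)
  | Sum.inl false => Sum.inl b
  | Sum.inl true => Sum.inr ⟨[], k.succ_pos⟩
  | Sum.inr l => Sum.inr ⟨l.1 ++ [b], by simpa using l.2⟩

theorem qChild_injective (k : ℕ) (b : Bool) : Function.Injective (qChild k b) := by
  rintro ((_ | _) | l) ((_ | _) | l') h
  all_goals simp_all [qChild, Subtype.ext_iff]

theorem qChild_false_ne_qChild_true {k : ℕ} {p q : QVert k} (hp : p ≠ Sum.inl true) :
    qChild k false p ≠ qChild k true q := by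
  rcases p with (_ | _) | l <;> rcases q with (_ | _) | l' <;> simp_all [qChild]

theorem qbase_succ_append (k : ℕ) (b : Bool) {σ : List Bool} (hσ : σ.length ≤ k) :
    qbase (k + 1) (σ ++ [b]) = (qbase k σ).map (qChild k b) (qChild k b) := by
  induction σ with
  | nil => cases b <;> rfl
  | cons c σ ih =>
    have hσ' : σ.length < k := hσ
    have hσb : (σ ++ [b]).length < k + 1 := by simpa using hσ'
    rw [List.cons_append, qbase, qbase, ih hσ'.le, dif_pos hσb, dif_pos hσ']
    cases c <;> rfl

theorem Qgraph_adj_base (k : ℕ) : (Qgraph k).Adj (Sum.inl false) (Sum.inl true) := by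
  simp [Qgraph]

theorem Qgraph_adj_qChild {k : ℕ} (b : Bool) {p q : QVert k} (h : (Qgraph k).Adj p q) :
    (Qgraph (k + 1)).Adj (qChild k b p) (qChild k b q) := by
  rw [Qgraph, fromEdgeSet_adj] at h ⊢
  obtain ⟨h, hne⟩ := h
  refine ⟨Or.inr ?_, (qChild_injective k b).ne hne⟩
  rw [← Sym2.map_mk]
  obtain h | ⟨σ, hσ, h⟩ := h
  · rw [Set.mem_singleton_iff.1 h]
    refine ⟨[], k.succ_pos, ?_⟩
    cases b
    exacts [Or.inl Sym2.eq_swap, Or.inr Sym2.eq_swap]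
  · refine ⟨σ ++ [b], by simpa using hσ, ?_⟩
    rw [qbase_succ_append k b hσ.le]
    exact h.imp (congrArg (Sym2.map (qChild k b))) (congrArg (Sym2.map (qChild k b)))

/-- `qChild` as a graph homomorphism. -/
def qChildHom (k : ℕ) (b : Bool) : Qgraph k →g Qgraph (k + 1) :=
  ⟨qChild k b, Qgraph_adj_qChild b⟩

variable {V : Type*} {G : SimpleGraph V} {S S₁ S₂ : Set V} {u v x : V} {k : ℕ}

/-- `G[S]` is a minor of `𝒬_k` with the ends of the base edge in the branch sets of `u`
and `v`. -/
def RootedAt (G : SimpleGraph V) (k : ℕ) (S : Set V) (u v : V) : Prop :=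
  ∃ f, IsRootedModel G (Qgraph k) S u v (Sum.inl false) (Sum.inl true) f

theorem rootedAt_pair (G : SimpleGraph V) (k : ℕ) (u v : V) : RootedAt G k {u, v} u v :=
  ⟨_, .pair G u v (Qgraph_adj_base k)⟩

theorem RootedAt.glue (h₁ : RootedAt G k S₁ u x) (h₂ : RootedAt G k S₂ v x)
    (hI : ∀ a ∈ S₁ ∩ S₂, a = x ∨ a = u ∧ a = v)
    (hE : ∀ a ∈ S₁, ∀ b ∈ S₂, G.Adj a b → a ∈ S₂ ∨ b ∈ S₁ ∨ a = u ∧ b = v) :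
    RootedAt G (k + 1) (S₁ ∪ S₂) u v := by
  obtain ⟨f, hf⟩ := h₁
  obtain ⟨g, hg⟩ := h₂
  refine ⟨_, (hf.map (qChildHom k false) (qChild_injective k false)).union
    (hg.map (qChildHom k true) (qChild_injective k true)) (Qgraph_adj_base (k + 1)) ?_ hI hE⟩
  rintro a b _ ⟨⟨p, -, rfl⟩, ⟨q, -, hqp⟩⟩
  by_contra hp
  exact qChild_false_ne_qChild_true (fun h => hp (h ▸ rfl)) hqp.symm

theorem RootedAt.succ (h : RootedAt G k S u v) : RootedAt G (k + 1) S u v := by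
  obtain ⟨f, hf⟩ := h
  have hv : {v, v} ⊆ S := by simpa using hf.mem_of_mem hf.right_mem
  have hglue := RootedAt.glue ⟨f, hf⟩ (rootedAt_pair G k v v) (by simp +contextual)
    fun a _ b hb _ => Or.inr (Or.inl (hv hb))
  rwa [Set.union_eq_self_of_subset_right hv] at hglue

theorem RootedAt.mono {l : ℕ} (h : RootedAt G k S u v) (hkl : k ≤ l) : RootedAt G l S u v :=
  Nat.le_induction h (fun _ _ => RootedAt.succ) l hkl

/-- `G[S]` is a minor of some `𝒬_k`, rooted at `u` and `v`. -/
def Rooted (G : SimpleGraph V) (S : Set V) (u v : V) : Prop :=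
  ∃ k, RootedAt G k S u v

namespace Rooted

theorem pair (G : SimpleGraph V) (u v : V) : Rooted G {u, v} u v :=
  ⟨0, rootedAt_pair G 0 u v⟩

theorem left_mem (h : Rooted G S u v) : u ∈ S :=
  let ⟨_, _, hf⟩ := h
  hf.mem_of_mem hf.left_mem

theorem right_mem (h : Rooted G S u v) : v ∈ S :=
  let ⟨_, _, hf⟩ := h
  hf.mem_of_mem hf.right_mem

theorem glue (h₁ : Rooted G S₁ u x) (h₂ : Rooted G S₂ v x)
    (hI : ∀ a ∈ S₁ ∩ S₂, a = x ∨ a = u ∧ a = v)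
    (hE : ∀ a ∈ S₁, ∀ b ∈ S₂, G.Adj a b → a ∈ S₂ ∨ b ∈ S₁ ∨ a = u ∧ b = v) :
    Rooted G (S₁ ∪ S₂) u v := by
  obtain ⟨k, hk⟩ := h₁
  obtain ⟨l, hl⟩ := h₂
  exact ⟨max k l + 1, (hk.mono (le_max_left k l)).glue (hl.mono (le_max_right k l)) hI hE⟩

theorem diag (h : Rooted G S u v) : Rooted G S u u := by
  have huv : {u, v} ⊆ S := Set.insert_subset h.left_mem (Set.singleton_subset_iff.2 h.right_mem)
  have hglue := h.glue (pair G u v) (fun _ ha => ha.2.symm.imp id fun h => ⟨h, h⟩)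
    fun _ _ _ hb _ => Or.inr (Or.inl (huv hb))
  rwa [Set.union_eq_self_of_subset_right huv] at hglue

theorem union_of_edge (h₁ : Rooted G S₁ u u) (h₂ : Rooted G S₂ v v) (hd : Disjoint S₁ S₂)
    (hE : ∀ a ∈ S₁, ∀ b ∈ S₂, G.Adj a b → a = u ∧ b = v) : Rooted G (S₁ ∪ S₂) u v := by
  have hu : u ∉ S₂ := Set.disjoint_left.1 hd h₁.left_mem
  have hglue : Rooted G (S₂ ∪ {u, v}) v u := by
    refine h₂.glue (pair G u v) ?_ ?_
    · rintro a ⟨ha, rfl | rfl⟩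
      exacts [absurd ha hu, Or.inl rfl]
    · rintro a ha b (rfl | rfl) hab
      · exact Or.inl (Or.inr (hE b h₁.left_mem a ha hab.symm).2)
      · exact Or.inr (Or.inl h₂.left_mem)
  have huv : {u, v} ⊆ S₁ ∪ S₂ := Set.insert_subset (Or.inl h₁.left_mem)
    (Set.singleton_subset_iff.2 (Or.inr h₂.left_mem))
  rw [← Set.union_eq_self_of_subset_right huv, Set.union_assoc]
  refine h₁.glue hglue ?_ ?_
  · rintro a ⟨ha₁, ha₂ | rfl | rfl⟩
    exacts [absurd ha₂ (Set.disjoint_left.1 hd ha₁), Or.inl rfl,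
      absurd h₂.left_mem (Set.disjoint_left.1 hd ha₁)]
  · rintro a ha b (hb | rfl | rfl) hab
    exacts [Or.inr (Or.inr (hE a ha b hb hab)), Or.inr (Or.inl h₁.left_mem),
      Or.inr (Or.inr (hE a ha b h₂.left_mem hab))]

end Rooted

end BinaryGluing

section Splitting

variable {V : Type*} {G : SimpleGraph V} {R S X : Set V} {a b u v x : V}

theorem mem_of_adj_of_notMem_componentIn (hb : b ∈ componentIn G (R \ X) v) (hab : G.Adj a b)
    (ha : a ∈ R) (ha' : a ∉ componentIn G (R \ X) v) : a ∈ X := by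
  by_contra haX
  exact ha' (mem_componentIn_of_adj hb hab.symm ⟨ha, haX⟩)

theorem Rooted.of_component (h₁ : Rooted G (S \ componentIn G (S \ {u}) v) u u)
    (h₂ : Rooted G (componentIn G (S \ {u}) v) v v)
    (huv : ∀ b ∈ componentIn G (S \ {u}) v, G.Adj u b → b = v) : Rooted G S u v := by
  have hCS : componentIn G (S \ {u}) v ⊆ S := (componentIn_subset G _ v).trans Set.sdiff_subset
  rw [← Set.sdiff_union_of_subset hCS]
  refine h₁.union_of_edge h₂ Set.disjoint_sdiff_left fun a ha b hb hab => ?_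
  have hau : a ∈ ({u} : Set V) := mem_of_adj_of_notMem_componentIn hb hab ha.1 ha.2
  obtain rfl : a = u := hau
  exact ⟨rfl, huv b hb hab⟩

theorem Rooted.of_separation (h₁ : Rooted G (S \ componentIn G ((S \ {u}) \ {x}) v) u x)
    (h₂ : Rooted G (insert x (componentIn G ((S \ {u}) \ {x}) v)) v x)
    (huv : ∀ b ∈ componentIn G ((S \ {u}) \ {x}) v, G.Adj u b → b = v) : Rooted G S u v := by
  have hDS : componentIn G ((S \ {u}) \ {x}) v ⊆ S :=
    (componentIn_subset G _ v).trans (Set.sdiff_subset.trans Set.sdiff_subset)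
  have hglue := h₁.glue h₂ ?_ ?_
  · rwa [Set.union_insert, Set.sdiff_union_of_subset hDS, Set.insert_eq_of_mem h₁.right_mem.1]
      at hglue
  · rintro a ⟨⟨-, haD⟩, rfl | ha⟩
    exacts [Or.inl rfl, absurd ha haD]
  · rintro a ⟨haS, haD⟩ b (rfl | hb) hab
    · exact Or.inr (Or.inl h₁.right_mem)
    · obtain rfl | hau := eq_or_ne a u
      · exact Or.inr (Or.inr ⟨rfl, huv b hb hab⟩)
      · have haR : a ∈ S \ {u} := ⟨haS, hau⟩
        have hax : a ∈ ({x} : Set V) := mem_of_adj_of_notMem_componentIn hb hab haR haD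
        exact Or.inl (Or.inl hax)

/-- Some connected set disjoint from `S` has an edge to both `u` and `v`: it stands for the part
of the graph already split off along the pair `u`, `v`. -/
def OuterLinked (G : SimpleGraph V) (S : Set V) (u v : V) : Prop :=
  ∃ W, (G.induce W).Connected ∧ Disjoint S W ∧ Touches G {u} W ∧ Touches G {v} W

theorem OuterLinked.sdiff (h : OuterLinked G S u v) (hX : (G.induce X).Connected) (hv : v ∈ X)
    (hx : Touches G {x} X) : OuterLinked G (S \ X) u x := by
  obtain ⟨W, hW, hSW, huW, hvW⟩ := h
  have hXW : Touches G X W := hvW.mono (Set.singleton_subset_iff.2 hv) subset_rfl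
  exact ⟨X ∪ W, hXW.connected_induce_union hX hW,
    Set.disjoint_union_right.2 ⟨Set.disjoint_sdiff_left, hSW.mono_left Set.sdiff_subset⟩,
    huW.mono subset_rfl Set.subset_union_right, hx.mono subset_rfl Set.subset_union_left⟩

theorem OuterLinked.of_adj_left (h : OuterLinked G S u v) (hux : G.Adj u x) (hR : R ⊆ S \ {u}) :
    OuterLinked G R v x := by
  obtain ⟨W, hW, hSW, huW, hvW⟩ := h
  exact ⟨{u} ∪ W, huW.connected_induce_union (connected_induce_singleton_s7 G u) hW,
    Set.disjoint_union_right.2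
      ⟨Set.disjoint_sdiff_left.mono_left hR, hSW.mono_left (hR.trans Set.sdiff_subset)⟩,
    hvW.mono subset_rfl Set.subset_union_right, touches_of_adj hux.symm rfl (Or.inl rfl)⟩

/-- The assertion proved by induction on `S`: `G[S]` has a rooted model at `(u, u)` for every
`u`, and at `(u, v)` whenever the outside of `S` links `u` and `v`. -/
structure HasRootedModels (G : SimpleGraph V) (S : Set V) : Prop where
  diag : ∀ u ∈ S, Rooted G S u u
  of_outerLinked : ∀ u ∈ S, ∀ v ∈ S, u ≠ v → OuterLinked G S u v → Rooted G S u v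

theorem rooted_of_ssubset_of_component (ih : ∀ T ⊂ S, HasRootedModels G T) (hu : u ∈ S)
    (hv : v ∈ S \ {u}) (huv : ∀ b ∈ componentIn G (S \ {u}) v, G.Adj u b → b = v) :
    Rooted G S u v := by
  have hvC : v ∈ componentIn G (S \ {u}) v := mem_componentIn_self hv
  have hCS := componentIn_subset G (S \ {u}) v
  have huC : u ∉ componentIn G (S \ {u}) v := fun h => (hCS h).2 rfl
  have h₁ : S \ componentIn G (S \ {u}) v ⊂ S :=
    ⟨Set.sdiff_subset, fun h => (h hv.1).2 hvC⟩
  have h₂ : componentIn G (S \ {u}) v ⊂ S :=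
    ⟨hCS.trans Set.sdiff_subset, fun h => huC (h hu)⟩
  exact .of_component ((ih _ h₁).diag u ⟨hu, huC⟩) ((ih _ h₂).diag v hvC) huv

theorem rooted_of_ssubset_of_separation (ih : ∀ T ⊂ S, HasRootedModels G T) (hu : u ∈ S)
    (hx : x ∈ S \ {u}) (hv : v ∈ (S \ {u}) \ {x})
    (huv : ∀ b ∈ componentIn G ((S \ {u}) \ {x}) v, G.Adj u b → b = v)
    (hux : OuterLinked G (S \ componentIn G ((S \ {u}) \ {x}) v) u x)
    (hvx : OuterLinked G (insert x (componentIn G ((S \ {u}) \ {x}) v)) v x) :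
    Rooted G S u v := by
  have hvD : v ∈ componentIn G ((S \ {u}) \ {x}) v := mem_componentIn_self hv
  have hDS := componentIn_subset G ((S \ {u}) \ {x}) v
  have huD : u ∉ componentIn G ((S \ {u}) \ {x}) v := fun h => (hDS h).1.2 rfl
  have hxD : x ∉ componentIn G ((S \ {u}) \ {x}) v := fun h => (hDS h).2 rfl
  have h₁ : S \ componentIn G ((S \ {u}) \ {x}) v ⊂ S :=
    ⟨Set.sdiff_subset, fun h => (h hv.1.1).2 hvD⟩
  have h₂ : insert x (componentIn G ((S \ {u}) \ {x}) v) ⊂ S := by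
    refine ⟨Set.insert_subset hx.1 fun b hb => (hDS hb).1.1, fun h => ?_⟩
    exact (h hu).elim (Ne.symm hx.2) huD
  exact .of_separation
    ((ih _ h₁).of_outerLinked u ⟨hu, huD⟩ x ⟨hx.1, hxD⟩ (Ne.symm hx.2) hux)
    ((ih _ h₂).of_outerLinked v (Or.inr hvD) x (Or.inl rfl) hv.2 hvx) huv

theorem exists_forall_mem_componentIn [Finite V] (G : SimpleGraph V) (R : Set V)
    {P : V → V → Prop} (hP : ∃ v x, P v x) :
    ∃ v x, P v x ∧ ∀ b y, P b y → b ∈ componentIn G (R \ {x}) v →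
      y ∈ componentIn G (R \ {x}) v → x ∈ componentIn G (R \ {y}) b := by
  obtain ⟨v₀, x₀, h₀⟩ := hP
  obtain ⟨⟨v, x⟩, hvx, hmin⟩ := exists_minimalFor_of_wellFoundedLT
    (fun e : V × V => P e.1 e.2) (fun e => componentIn G (R \ {e.2}) e.1) ⟨(v₀, x₀), h₀⟩
  refine ⟨v, x, hvx, fun b y hby hb hy => ?_⟩
  by_contra hx
  have hlt := componentIn_ssubset_of_notMem hb hy hx
  exact hlt.2 (hmin (j := (b, y)) hby hlt.1)

theorem rooted_of_outerLinked [Finite V] (hG : Outerplanar G)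
    (ih : ∀ T ⊂ S, HasRootedModels G T) (hu : u ∈ S) (hv : v ∈ S) (huv : u ≠ v)
    (hlink : OuterLinked G S u v) : Rooted G S u v := by
  by_cases hC : ∀ b ∈ componentIn G (S \ {u}) v, G.Adj u b → b = v
  · exact rooted_of_ssubset_of_component ih hu ⟨hv, huv.symm⟩ hC
  push Not at hC
  obtain ⟨x₀, hx₀, hux₀, hx₀v⟩ := hC
  obtain ⟨_, x, ⟨rfl, hxC, hux, hxv⟩, hmin⟩ := exists_forall_mem_componentIn G (S \ {u})
    (P := fun b y => v = b ∧ y ∈ componentIn G (S \ {u}) b ∧ G.Adj u y ∧ y ≠ b)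
    ⟨v, x₀, rfl, hx₀, hux₀, hx₀v⟩
  have hvR : v ∈ (S \ {u}) \ {x} := ⟨⟨hv, huv.symm⟩, hxv.symm⟩
  have hxS : x ∈ S \ {u} := componentIn_subset G _ v hxC
  have hDS := componentIn_subset G ((S \ {u}) \ {x}) v
  refine rooted_of_ssubset_of_separation ih hu hxS hvR (fun y hy huy => ?_) ?_ ?_
  · by_contra hyv
    have hyC : y ∈ componentIn G (S \ {u}) v := componentIn_mono Set.sdiff_subset hy
    have hxD : x ∈ componentIn G ((S \ {u}) \ {y}) v :=
      hmin v y ⟨rfl, hyC, huy, hyv⟩ (mem_componentIn_self hvR) hy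
    obtain ⟨W, hW, hSW, huW, hvW⟩ := hlink
    exact hG.2 (isMinor_K23_of_fork (fun h => h.2 rfl) hux huy hxD hy hW
      (hSW.mono_left Set.sdiff_subset) (Set.disjoint_left.1 hSW hu) huW hvW)
  · exact hlink.sdiff (connected_induce_componentIn hvR) (mem_componentIn_self hvR)
      (componentIn_sdiff_singleton_touches hxC hxv.symm).symm
  · exact hlink.of_adj_left hux (Set.insert_subset hxS (hDS.trans Set.sdiff_subset))

theorem exists_adj_pair_of_forall_componentIn (hS : S ≠ {u}) (hu : u ∈ S)
    (h : ∀ v ∈ S \ {u}, ∃ b ∈ componentIn G (S \ {u}) v, G.Adj u b ∧ b ≠ v) :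
    ∃ v x, G.Adj u v ∧ G.Adj u x ∧ x ≠ v ∧ x ∈ componentIn G (S \ {u}) v := by
  obtain ⟨w, hwS, hwu⟩ : ∃ w ∈ S, w ≠ u := by
    by_contra! hw
    exact hS ((Set.subset_singleton_iff.2 hw).antisymm (Set.singleton_subset_iff.2 hu))
  obtain ⟨v, hvw, huv, -⟩ := h w ⟨hwS, hwu⟩
  obtain ⟨x, hxv, hux, hne⟩ := h v (componentIn_subset G _ w hvw)
  exact ⟨v, x, huv, hux, hne, hxv⟩

theorem rooted_self [Finite V] (hG : Outerplanar G) (ih : ∀ T ⊂ S, HasRootedModels G T)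
    (hu : u ∈ S) : Rooted G S u u := by
  by_cases hC : ∃ v ∈ S \ {u}, ∀ b ∈ componentIn G (S \ {u}) v, G.Adj u b → b = v
  · obtain ⟨v, hv, huv⟩ := hC
    exact (rooted_of_ssubset_of_component ih hu hv huv).diag
  push Not at hC
  obtain rfl | hS := eq_or_ne S {u}
  · simpa using Rooted.pair G u u
  obtain ⟨v, x, ⟨huv, hux, hxv, hxC⟩, hmin⟩ := exists_forall_mem_componentIn G (S \ {u})
    (exists_adj_pair_of_forall_componentIn hS hu hC)
  have hxS : x ∈ S \ {u} := componentIn_subset G _ v hxC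
  have hvR : v ∈ (S \ {u}) \ {x} := ⟨mem_of_mem_componentIn hxC, hxv.symm⟩
  have hvD : v ∈ componentIn G ((S \ {u}) \ {x}) v := mem_componentIn_self hvR
  have hDS := componentIn_subset G ((S \ {u}) \ {x}) v
  refine (rooted_of_ssubset_of_separation ih hu hxS hvR (fun y hy huy => ?_) ?_ ?_).diag
  · by_contra hyv
    have hyC : y ∈ componentIn G (S \ {u}) v := componentIn_mono Set.sdiff_subset hy
    have hxv' : x ∈ componentIn G ((S \ {u}) \ {y}) v :=
      hmin v y ⟨huv, huy, hyv, hyC⟩ hvD hy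
    have hxy : x ∈ componentIn G ((S \ {u}) \ {v}) y :=
      hmin y v ⟨huy, huv, Ne.symm hyv, mem_componentIn_symm hyC⟩ hy hvD
    exact not_outerplanar_of_triangle (fun h => h.2 rfl) hux huy huv hxv' hy hxy hG
  · exact ⟨_, connected_induce_componentIn hvR, Set.disjoint_sdiff_left,
      touches_of_adj huv rfl hvD, (componentIn_sdiff_singleton_touches hxC hxv.symm).symm⟩
  · exact ⟨{u}, connected_induce_singleton_s7 G u, Set.disjoint_sdiff_left.mono_left
      (Set.insert_subset hxS (hDS.trans Set.sdiff_subset)), touches_of_adj huv.symm rfl rfl,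
      touches_of_adj hux.symm rfl rfl⟩

theorem hasRootedModels [Finite V] (hG : Outerplanar G) (S : Set V) : HasRootedModels G S := by
  induction S using WellFoundedLT.induction with
  | ind S ih =>
    exact ⟨fun u => rooted_self hG ih, fun u hu v => rooted_of_outerLinked hG ih hu⟩

end Splitting

/-- Lemma 2.4. If a graph `H` has no `K₄` or `K_{2,3}` minor, then `H` is
isomorphic to a minor of `𝒬_k` for some `k`. -/
theorem minor_of_Qk_of_no_K4_K23_minor {V : Type} [Fintype V] (H : SimpleGraph V)
    (h4 : ¬ IsMinor K4 H) (h23 : ¬ IsMinor K23 H) :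
    ∃ k : ℕ, 0 < k ∧ IsMinor H (Qgraph k) := by
  rcases isEmpty_or_nonempty V with _ | ⟨⟨u⟩⟩
  · exact ⟨1, one_pos, isEmptyElim, isEmptyElim, isEmptyElim, isEmptyElim, isEmptyElim⟩
  · obtain ⟨k, hk⟩ := (hasRootedModels ⟨h4, h23⟩ Set.univ).diag u trivial
    obtain ⟨f, hf⟩ := hk.succ
    exact ⟨k + 1, k.succ_pos, hf.isMinor⟩
end
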